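/- arXiv:2212.09249 — 5 statements merged into one kernel-verified Lean document; each statement's English description precedes it below -/
import Mathlib

section
/- The ℂ-vector space of all polynomials in Λ⁰ of total degree at most 2d has dimension equal to the number of (p,q)-hook partitions λ with |λ| ≤ d. -/
/-!
# The dimension of the space of even supersymmetric polynomials of bounded degree

A polynomial invariant under all sign changes is a polynomial in the squares `uᵢ = xᵢ²`,
`vⱼ = yⱼ²`. Restricted to `xᵢ = t`, `yⱼ = -t`, the shift condition says that a polynomial in `t`
has period `1`, that is, it does not depend on `t`. Hence `f ↦ f(x², y²)` identifies the algebra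
`superAlg p q` of supersymmetric polynomials in `u, v` (symmetric in each block, and independent of
the common value of `uᵢ` and `vⱼ` when they agree) with `Λ⁰`, doubling degrees (`map_superDeg`).

The dimension of `superAlg p q` in degree at most `d` is computed by restricting to
`u₀ = v₀ = 0`, which maps `superAlg (p + 1) (q + 1)` to `superAlg p q`. The kernel consists of the
products `∏ (uᵢ - vⱼ) F` with `F` symmetric in each block (`exists_of_restr_eq_zero`). The
restriction is onto because `superAlg p q` is generated by the complete supersymmetric polynomials
`hₙ`, the coefficients of `∏ⱼ (1 - vⱼ T) / ∏ᵢ (1 - uᵢ T)`, and these restrict to one another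
(`superAlg_le_genAlg`). By the description of the kernel, generation follows by induction once all
the products `∏ (uᵢ - vⱼ) F` are known to be polynomials in the `hₙ` (`resPoly_mul_mem`); this
rests on a Jacobi–Trudi type identity (`resultant_mul_alternant`) for symmetric functions of `u`
alone, together with `∏ⱼ (1 - vⱼ T) = (∑ hₙ Tⁿ) ∏ᵢ (1 - uᵢ T)` to bring in symmetric functions
of `v`. As symmetric polynomials have coordinates indexed by weakly decreasing exponents
(`rank_symDeg`), the dimension for `(p + 1, q + 1)` exceeds the one for `(p, q)` by the number of
pairs of partitions with at most `p + 1` and `q + 1` parts and total size at most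
`d - (p + 1)(q + 1)`.

Hook partitions satisfy the same recursion: the Young diagram of a `(p + 1, q + 1)`-hook partition
either is that of a `(p, q)`-hook partition or contains the `(p + 1) × (q + 1)` rectangle, and in
the latter case it consists of this rectangle, a partition to its right and the conjugate of a
partition below it (`rectSet_equiv`). If `p = 0` or `q = 0`, both counts are given directly by pairs
of partitions.
-/

open MvPolynomial

/-- A `(p,q)`-hook partition: a weakly decreasing finitely supported sequence of
naturals (rows indexed from `0`, so `part i` is the row `λ_{i+1}` of the usual
1-indexed notation) whose `(p+1)`-st row is at most `q`. -/
structure HookPartition (p q : ℕ) where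
  part : ℕ →₀ ℕ
  antitone' : ∀ ⦃i j : ℕ⦄, i ≤ j → part j ≤ part i
  hook' : part p ≤ q

namespace HookPartition

variable {p q : ℕ}

/-- `|λ|`, the size of the partition. -/
def size (μ : HookPartition p q) : ℕ := μ.part.sum fun _ n => n

/-- The transpose `λ'_j = #{rows i : λ_i ≥ j}` (here `j ≥ 1` is the genuine
1-indexed column index). -/
def conj (μ : HookPartition p q) (j : ℕ) : ℕ :=
  (μ.part.support.filter fun i => j ≤ μ.part i).card

/-- `λ♮ ∈ ℂ^{p+q}`: first `p` coordinates `λ_1, …, λ_p`, last `q` coordinates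
`⟨λ'_1 − p⟩, …, ⟨λ'_q − p⟩` (truncated subtraction realises `⟨x⟩ = max (x, 0)`). -/
def natPt (μ : HookPartition p q) : Fin p ⊕ Fin q → ℂ
  | .inl i => (μ.part (i : ℕ) : ℂ)
  | .inr j => ((μ.conj ((j : ℕ) + 1) - p : ℕ) : ℂ)

end HookPartition

/-- The Weyl vector `ρ`: `x`-coordinates `2(p−i)+1−2q` for `i = 1, …, p`,
`y`-coordinates `2(q−j)+1` for `j = 1, …, q` (0-indexed below). -/
def hookRho (p q : ℕ) : Fin p ⊕ Fin q → ℂ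
  | .inl i => 2 * ((p : ℂ) - ((i : ℕ) : ℂ) - 1) + 1 - 2 * (q : ℂ)
  | .inr j => 2 * ((q : ℂ) - ((j : ℕ) : ℂ) - 1) + 1

/-- The space `Λ⁰` of even supersymmetric polynomials: symmetric in the `x`'s and
in the `y`'s separately, invariant under all sign changes of the variables, and
satisfying `f(X + eᵢ − dⱼ) = f(X)` whenever `xᵢ + yⱼ = 0`. -/
noncomputable def LambdaZero (p q : ℕ) : Submodule ℂ (MvPolynomial (Fin p ⊕ Fin q) ℂ) where
  carrier := {f |
    (∀ σ : Equiv.Perm (Fin p), ∀ X : Fin p ⊕ Fin q → ℂ,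
      eval (X ∘ Sum.map σ id) f = eval X f) ∧
    (∀ τ : Equiv.Perm (Fin q), ∀ X : Fin p ⊕ Fin q → ℂ,
      eval (X ∘ Sum.map id τ) f = eval X f) ∧
    (∀ v : Fin p ⊕ Fin q, ∀ X : Fin p ⊕ Fin q → ℂ,
      eval (Function.update X v (-(X v))) f = eval X f) ∧
    (∀ i : Fin p, ∀ j : Fin q, ∀ X : Fin p ⊕ Fin q → ℂ,
      X (Sum.inl i) + X (Sum.inr j) = 0 →
      eval (fun v => X v + (if v = Sum.inl i then 1 else 0)
          - (if v = Sum.inr j then 1 else 0)) f = eval X f)}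
  add_mem' := by
    rintro f g ⟨hf1, hf2, hf3, hf4⟩ ⟨hg1, hg2, hg3, hg4⟩
    refine ⟨fun σ X => ?_, fun τ X => ?_, fun v X => ?_, fun i j X hX => ?_⟩ <;>
      simp only [map_add]
    · rw [hf1, hg1]
    · rw [hf2, hg2]
    · rw [hf3, hg3]
    · rw [hf4 i j X hX, hg4 i j X hX]
  zero_mem' := by
    refine ⟨fun σ X => ?_, fun τ X => ?_, fun v X => ?_, fun i j X hX => ?_⟩ <;> simp
  smul_mem' := by
    rintro c f ⟨hf1, hf2, hf3, hf4⟩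
    refine ⟨fun σ X => ?_, fun τ X => ?_, fun v X => ?_, fun i j X hX => ?_⟩ <;>
      simp only [smul_eval]
    · rw [hf1]
    · rw [hf2]
    · rw [hf3]
    · rw [hf4 i j X hX]

/-- The normalisation constant
`∏_{(i,j)∈μ} (μ_i − j + μ'_j − i + 1)(μ_i + j − μ'_j − i + 2p − 2q)`,
the product running over all boxes of `μ`, i.e. pairs `(i, j)` of positive
integers with `1 ≤ j ≤ μ_i`; below a box is encoded as a 0-indexed row
`r ∈ support` (so `i = r + 1`) together with `j ∈ [1, μ_i]`. -/
noncomputable def hookNorm (p q : ℕ) (μ : HookPartition p q) : ℂ :=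
  ∏ r ∈ μ.part.support, ∏ j ∈ Finset.Icc 1 (μ.part r),
    (((μ.part r : ℂ) - (j : ℂ) + (μ.conj j : ℂ) - ((r : ℂ) + 1) + 1) *
      ((μ.part r : ℂ) + (j : ℂ) - (μ.conj j : ℂ) - ((r : ℂ) + 1)
        + 2 * (p : ℂ) - 2 * (q : ℂ)))

/-- The subspace of `Λ⁰` of polynomials of total degree at most `2d`. -/
noncomputable def LambdaZeroDeg (p q d : ℕ) :
    Submodule ℂ (MvPolynomial (Fin p ⊕ Fin q) ℂ) where
  carrier := {f | f ∈ LambdaZero p q ∧ f.totalDegree ≤ 2 * d}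
  add_mem' := fun hf hg => ⟨add_mem hf.1 hg.1,
    le_trans (MvPolynomial.totalDegree_add _ _) (max_le hf.2 hg.2)⟩
  zero_mem' := ⟨zero_mem _, by simp⟩
  smul_mem' := fun c f hf => ⟨Submodule.smul_mem _ c hf.1,
    le_trans (MvPolynomial.totalDegree_smul_le c f) hf.2⟩

namespace HookSuper

/-! ### The supersymmetric generating series -/

section Series

/-- The generating series `∏ⱼ (1 - vⱼ T) / ∏ᵢ (1 - uᵢ T)` of the complete supersymmetric
functions; the inverse factors are written as geometric series. -/
noncomputable def genH {K : Type*} [CommRing K] {p q : ℕ} (u : Fin p → K) (v : Fin q → K) :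
    PowerSeries K :=
  (∏ j, (1 - PowerSeries.C (v j) * PowerSeries.X)) * ∏ i, PowerSeries.mk (fun n => u i ^ n)

variable {K : Type*} [CommRing K] {p q : ℕ}

lemma geom_mul (a : K) :
    (1 - PowerSeries.C a * PowerSeries.X) * PowerSeries.mk (fun n => a ^ n) = 1 := by
  ext n
  rw [sub_mul, one_mul, mul_assoc]
  cases n with
  | zero => simp
  | succ n => simp [PowerSeries.coeff_succ_X_mul, pow_succ', PowerSeries.coeff_one]

lemma genH_mul_prod (u : Fin p → K) (v : Fin q → K) :
    genH u v * ∏ i, (1 - PowerSeries.C (u i) * PowerSeries.X)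
      = ∏ j, (1 - PowerSeries.C (v j) * PowerSeries.X) := by
  have h : ∏ i, (PowerSeries.mk (fun n => u i ^ n) *
      (1 - PowerSeries.C (u i) * PowerSeries.X)) = 1 :=
    Finset.prod_eq_one fun i _ => by rw [mul_comm, geom_mul]
  rw [genH, mul_assoc, ← Finset.prod_mul_distrib, h, mul_one]

lemma map_genH {L : Type*} [CommRing L] (φ : K →+* L) (u : Fin p → K) (v : Fin q → K) :
    PowerSeries.map φ (genH u v) = genH (φ ∘ u) (φ ∘ v) := by
  rw [genH, genH, map_mul, map_prod, map_prod]
  congr 1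
  · simp
  · refine Finset.prod_congr rfl fun i _ => ?_
    ext n; simp

lemma genH_comp_perm (u : Fin p → K) (v : Fin q → K) (σ : Equiv.Perm (Fin p))
    (τ : Equiv.Perm (Fin q)) : genH (u ∘ σ) (v ∘ τ) = genH u v := by
  rw [genH, genH]
  congr 1
  · exact Equiv.prod_comp τ (fun j => (1 - PowerSeries.C (v j) * PowerSeries.X))
  · exact Equiv.prod_comp σ (fun i => PowerSeries.mk (fun n => u i ^ n))

/-- If `uᵢ = vⱼ`, the corresponding factors cancel, so the common value is irrelevant. -/
lemma genH_update (u : Fin p → K) (v : Fin q → K) (i : Fin p) (j : Fin q) (h : u i = v j)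
    (t : K) : genH (Function.update u i t) (Function.update v j t) = genH u v := by
  have key : ∀ (u : Fin p → K) (v : Fin q → K), u i = v j →
      genH u v = (∏ k ∈ Finset.univ.erase j, (1 - PowerSeries.C (v k) * PowerSeries.X)) *
        ∏ k ∈ Finset.univ.erase i, PowerSeries.mk (fun n => u k ^ n) := by
    intro u v h
    rw [genH, ← Finset.mul_prod_erase _ _ (Finset.mem_univ j),
      ← Finset.mul_prod_erase _ (fun i => PowerSeries.mk (fun n => u i ^ n)) (Finset.mem_univ i),
      mul_mul_mul_comm, h, geom_mul, one_mul]
  rw [key u v h, key _ _ (by simp)]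
  congr 1
  · refine Finset.prod_congr rfl fun k hk => ?_
    rw [Function.update_of_ne (Finset.ne_of_mem_erase hk)]
  · refine Finset.prod_congr rfl fun k hk => ?_
    rw [Function.update_of_ne (Finset.ne_of_mem_erase hk)]

lemma genH_cons (u : Fin p → K) (v : Fin q → K) (t : K) :
    genH (Fin.cons t u : Fin (p + 1) → K) (Fin.cons t v : Fin (q + 1) → K) = genH u v := by
  rw [genH, genH, Fin.prod_univ_succ, Fin.prod_univ_succ, mul_mul_mul_comm]
  simp only [Fin.cons_zero, Fin.cons_succ, geom_mul, one_mul]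

/-- High coefficients of `∏ⱼ (1 - vⱼ T) / (1 - aT)`. -/
lemma coeff_prod_geom {ι : Type*} (s : Finset ι) (v : ι → K) (a : K) (n : ℕ) :
    PowerSeries.coeff (s.card + n) ((∏ j ∈ s, (1 - PowerSeries.C (v j) * PowerSeries.X)) *
      PowerSeries.mk (fun n => a ^ n)) = a ^ n * ∏ j ∈ s, (a - v j) := by
  classical
  induction s using Finset.induction_on generalizing n with
  | empty => simp
  | insert j s hj ih =>
    rw [Finset.prod_insert hj, Finset.prod_insert hj, Finset.card_insert_of_notMem hj,
      mul_assoc, sub_mul, one_mul, mul_assoc, map_sub, PowerSeries.coeff_C_mul,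
      show s.card + 1 + n = (s.card + n) + 1 by ring, PowerSeries.coeff_succ_X_mul, ih,
      show s.card + n + 1 = s.card + (n + 1) by ring, ih]
    ring

lemma coeff_prod_linear {ι : Type*} (s : Finset ι) (u : ι → K) (n : ℕ) (hn : s.card < n) :
    PowerSeries.coeff n (∏ j ∈ s, (1 - PowerSeries.C (u j) * PowerSeries.X)) = 0 := by
  classical
  induction s using Finset.induction_on generalizing n with
  | empty => simp [PowerSeries.coeff_one]; rintro rfl; simp at hn
  | insert j s hj ih =>
    rw [Finset.card_insert_of_notMem hj] at hn
    obtain ⟨m, rfl⟩ : ∃ m, n = m + 1 := ⟨n - 1, by omega⟩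
    rw [Finset.prod_insert hj, sub_mul, one_mul, mul_assoc, map_sub, PowerSeries.coeff_C_mul,
      PowerSeries.coeff_succ_X_mul, ih _ (by omega), ih _ (by omega)]
    simp

lemma coeff_prod_linear_eq_esymm (v : Fin q → K) (k : ℕ) :
    PowerSeries.coeff k (∏ j, (1 - PowerSeries.C (v j) * PowerSeries.X))
      = (-1) ^ k * ∑ t ∈ Finset.powersetCard k Finset.univ, ∏ j ∈ t, v j := by
  have h1 : (∏ j, (1 - PowerSeries.C (v j) * PowerSeries.X)) =
      ∏ j, (1 + PowerSeries.C (- v j) * PowerSeries.X) := by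
    refine Finset.prod_congr rfl fun j _ => ?_
    rw [map_neg]; ring
  rw [h1, Finset.prod_one_add, map_sum, ← Finset.sum_subset (Finset.filter_subset
    (fun t : Finset (Fin q) => t.card = k) _), Finset.mul_sum]
  · refine Finset.sum_congr ?_ ?_
    · ext t; simp [Finset.mem_powersetCard]
    · intro t ht
      have ht : t.card = k := by simpa [Finset.mem_powersetCard] using ht
      rw [Finset.prod_mul_distrib, ← map_prod, Finset.prod_const, PowerSeries.coeff_C_mul,
        PowerSeries.coeff_X_pow, ht, if_pos rfl, mul_one, Finset.prod_neg, ht]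
  · intro t _ ht
    have ht : t.card ≠ k := by simpa using ht
    rw [Finset.prod_mul_distrib, ← map_prod, Finset.prod_const, PowerSeries.coeff_C_mul,
        PowerSeries.coeff_X_pow, if_neg (Ne.symm ht), mul_zero]

/-- The Jacobi–Trudi type matrix `h_{q + aₖ - l}`. -/
noncomputable def jtMatrix (u : Fin p → K) (v : Fin q → K) (a : Fin p → ℕ) :
    Matrix (Fin p) (Fin p) K :=
  Matrix.of fun k l => if (l : ℕ) ≤ q + a k then
    PowerSeries.coeff (q + a k - l) (genH u v) else 0

/-- The matrix of coefficients of the series `∏_{k ≠ i} (1 - uₖ T)`. -/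
noncomputable def cofMatrix (u : Fin p → K) : Matrix (Fin p) (Fin p) K :=
  Matrix.of fun l i => PowerSeries.coeff (l : ℕ)
    (∏ k ∈ Finset.univ.erase i, (1 - PowerSeries.C (u k) * PowerSeries.X))

/-- Multiplying the generating series by `∏_{k ≠ i} (1 - uₖ T)` leaves
`∏ⱼ (1 - vⱼ T) / (1 - uᵢ T)`, whose high coefficients are `∏ⱼ (uᵢ - vⱼ)` times powers of
`uᵢ`. -/
lemma jt_mul_cof (u : Fin p → K) (v : Fin q → K) (a : Fin p → ℕ) :
    jtMatrix u v a * cofMatrix u =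
      Matrix.of fun k i => (∏ j, (u i - v j)) * u i ^ a k := by
  ext k i
  have h1 : genH u v * (∏ k ∈ Finset.univ.erase i, (1 - PowerSeries.C (u k) * PowerSeries.X))
      = (∏ j, (1 - PowerSeries.C (v j) * PowerSeries.X)) * PowerSeries.mk (fun n => u i ^ n) := by
    rw [← genH_mul_prod u v, ← Finset.mul_prod_erase _ _ (Finset.mem_univ i)]
    linear_combination (- genH u v * (∏ k ∈ Finset.univ.erase i,
      (1 - PowerSeries.C (u k) * PowerSeries.X))) * geom_mul (u i)
  have h2 := coeff_prod_geom Finset.univ v (u i) (a k)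
  rw [Finset.card_univ, Fintype.card_fin, ← h1, mul_comm, PowerSeries.coeff_mul,
    Finset.Nat.sum_antidiagonal_eq_sum_range_succ_mk] at h2
  simp only [Matrix.mul_apply, jtMatrix, cofMatrix, Matrix.of_apply]
  rw [mul_comm, ← h2]
  rw [Finset.sum_fin_eq_sum_range]
  have hc : (Finset.univ.erase i).card = p - 1 := by simp
  have hp : 0 < p := i.pos
  -- both sums are supported on the indices below `min p (q + aₖ + 1)`
  trans ∑ l ∈ Finset.range p ∩ Finset.range (q + a k + 1), PowerSeries.coeff l
    (∏ k ∈ Finset.univ.erase i, (1 - PowerSeries.C (u k) * PowerSeries.X)) *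
      PowerSeries.coeff (q + a k - l) (genH u v)
  · symm
    refine Finset.sum_subset_zero_on_sdiff Finset.inter_subset_left ?_ ?_
    · intro l hl
      simp only [Finset.mem_sdiff, Finset.mem_inter, Finset.mem_range] at hl
      rw [dif_pos hl.1, if_neg (by simp only; omega), zero_mul]
    · intro l hl
      simp only [Finset.mem_inter, Finset.mem_range] at hl
      rw [dif_pos hl.1, if_pos (by simp only; omega), mul_comm]
  · refine Finset.sum_subset_zero_on_sdiff Finset.inter_subset_right ?_ ?_
    · intro l hl
      simp only [Finset.mem_sdiff, Finset.mem_inter, Finset.mem_range] at hl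
      rw [coeff_prod_linear _ _ _ (by omega), zero_mul]
    · intro l hl
      rfl

lemma det_cofMatrix (u : Fin p → K) : (cofMatrix u).det = (Matrix.vandermonde u).det := by
  have h := jt_mul_cof u (Fin.elim0 : Fin 0 → K) (fun k => (k : ℕ))
  have h1 : (jtMatrix u (Fin.elim0 : Fin 0 → K) (fun k => (k : ℕ))).det = 1 := by
    rw [Matrix.det_of_isLowerTriangular]
    · refine Finset.prod_eq_one fun k _ => ?_
      simp [jtMatrix, genH, PowerSeries.coeff_zero_eq_constantCoeff, map_prod,
        ← PowerSeries.coeff_zero_eq_constantCoeff_apply]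
    · intro k l hkl
      have : (k : ℕ) < l := hkl
      have hn : ¬ (l : ℕ) ≤ 0 + (k : ℕ) := by omega
      exact if_neg hn
  have h2 := congrArg Matrix.det h
  rw [Matrix.det_mul, h1, one_mul] at h2
  rw [h2, ← Matrix.det_transpose]
  congr 1
  ext k i
  simp [Matrix.vandermonde]

/-- The alternant with exponents `a`, multiplied by the resultant `∏ (uᵢ - vⱼ)`, is a
determinant in the complete supersymmetric functions times the Vandermonde determinant. -/
lemma resultant_mul_alternant (u : Fin p → K) (v : Fin q → K) (a : Fin p → ℕ) :
    (∏ i, ∏ j, (u i - v j)) * (Matrix.of fun k i => u i ^ a k : Matrix (Fin p) (Fin p) K).det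
      = (jtMatrix u v a).det * (Matrix.vandermonde u).det := by
  rw [← det_cofMatrix, ← Matrix.det_mul, jt_mul_cof, ← Matrix.det_mul_row]
  rfl

end Series

/-! ### Supersymmetric polynomials -/

/-- The complete supersymmetric polynomial `hₙ(u | v)`, where `u` and `v` are the two blocks of
variables. -/
noncomputable def hPoly (p q n : ℕ) : MvPolynomial (Fin p ⊕ Fin q) ℂ :=
  PowerSeries.coeff n (genH (fun i => X (Sum.inl i)) (fun j => X (Sum.inr j)))

lemma eval_hPoly {p q : ℕ} (n : ℕ) (Z : Fin p ⊕ Fin q → ℂ) :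
    eval Z (hPoly p q n) = PowerSeries.coeff n (genH (Z ∘ Sum.inl) (Z ∘ Sum.inr)) := by
  rw [hPoly, ← PowerSeries.coeff_map, map_genH]
  congr 2 <;> ext <;> simp

/-- The algebra of supersymmetric polynomials: those that are symmetric in each block of
variables and that do not depend on the common value of `uᵢ` and `vⱼ` when these two agree. -/
noncomputable def superAlg (p q : ℕ) : Subalgebra ℂ (MvPolynomial (Fin p ⊕ Fin q) ℂ) where
  carrier := {f |
    (∀ (σ : Equiv.Perm (Fin p)) (τ : Equiv.Perm (Fin q)) (Z : Fin p ⊕ Fin q → ℂ),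
      eval (Z ∘ Sum.map σ τ) f = eval Z f) ∧
    (∀ (i : Fin p) (j : Fin q) (Z : Fin p ⊕ Fin q → ℂ) (t : ℂ), Z (Sum.inl i) = Z (Sum.inr j) →
      eval (Function.update (Function.update Z (Sum.inl i) t) (Sum.inr j) t) f = eval Z f)}
  mul_mem' := by
    rintro f g ⟨hf1, hf2⟩ ⟨hg1, hg2⟩
    refine ⟨fun σ τ Z => ?_, fun i j Z t h => ?_⟩ <;> simp only [map_mul]
    · rw [hf1, hg1]
    · rw [hf2 i j Z t h, hg2 i j Z t h]
  add_mem' := by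
    rintro f g ⟨hf1, hf2⟩ ⟨hg1, hg2⟩
    refine ⟨fun σ τ Z => ?_, fun i j Z t h => ?_⟩ <;> simp only [map_add]
    · rw [hf1, hg1]
    · rw [hf2 i j Z t h, hg2 i j Z t h]
  algebraMap_mem' := by
    intro r
    refine ⟨fun σ τ Z => ?_, fun i j Z t h => ?_⟩ <;> simp [algebraMap_eq]

/-- The algebra generated by the complete supersymmetric polynomials. -/
noncomputable def genAlg (p q : ℕ) : Subalgebra ℂ (MvPolynomial (Fin p ⊕ Fin q) ℂ) :=
  (aeval (hPoly p q) : MvPolynomial ℕ ℂ →ₐ[ℂ] MvPolynomial (Fin p ⊕ Fin q) ℂ).range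

lemma hPoly_mem_genAlg (p q n : ℕ) : hPoly p q n ∈ genAlg p q :=
  ⟨X n, by simp⟩

lemma hPoly_mem_superAlg (p q n : ℕ) : hPoly p q n ∈ superAlg p q := by
  refine ⟨fun σ τ Z => ?_, fun i j Z t h => ?_⟩
  · rw [eval_hPoly, eval_hPoly, ← genH_comp_perm (Z ∘ Sum.inl) (Z ∘ Sum.inr) σ τ]
    rfl
  · rw [eval_hPoly, eval_hPoly, ← genH_update (Z ∘ Sum.inl) (Z ∘ Sum.inr) i j h t]
    congr 2
    · ext k
      simp [Function.update_apply]
    · ext k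
      simp [Function.update_apply]

lemma genAlg_le_superAlg (p q : ℕ) : genAlg p q ≤ superAlg p q := by
  rintro _ ⟨P, rfl⟩
  change aeval (hPoly p q) P ∈ superAlg p q
  induction P using MvPolynomial.induction_on with
  | C a => rw [aeval_C]; exact Subalgebra.algebraMap_mem _ a
  | add f g hf hg => rw [map_add]; exact add_mem hf hg
  | mul_X f n hf => rw [map_mul, aeval_X]; exact mul_mem hf (hPoly_mem_superAlg p q n)

/-- The polynomials that are symmetric in each of the two blocks of variables. -/
noncomputable def symSub (p q : ℕ) : Submodule ℂ (MvPolynomial (Fin p ⊕ Fin q) ℂ) where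
  carrier := {f | ∀ (σ : Equiv.Perm (Fin p)) (τ : Equiv.Perm (Fin q)),
    rename (Sum.map σ τ) f = f}
  add_mem' := by
    intro f g hf hg σ τ
    rw [map_add, hf, hg]
  zero_mem' := by intro σ τ; simp
  smul_mem' := by
    intro c f hf σ τ
    rw [map_smul, hf]

lemma mem_symSub_iff {p q : ℕ} {f : MvPolynomial (Fin p ⊕ Fin q) ℂ} : f ∈ symSub p q ↔
    ∀ (σ : Equiv.Perm (Fin p)) (τ : Equiv.Perm (Fin q)) (Z : Fin p ⊕ Fin q → ℂ),
      eval (Z ∘ Sum.map σ τ) f = eval Z f := by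
  constructor
  · intro h σ τ Z
    rw [← eval_rename, h σ τ]
  · intro h σ τ
    refine MvPolynomial.funext fun Z => ?_
    rw [eval_rename, h]

/-- The product `∏ (uᵢ - vⱼ)`. -/
noncomputable def resPoly (p q : ℕ) : MvPolynomial (Fin p ⊕ Fin q) ℂ :=
  ∏ i : Fin p, ∏ j : Fin q, (X (Sum.inl i) - X (Sum.inr j))

lemma resPoly_mem_symSub (p q : ℕ) : resPoly p q ∈ symSub p q := by
  intro σ τ
  simp only [resPoly, map_prod, map_sub, rename_X, Sum.map_inl, Sum.map_inr]
  rw [Equiv.prod_comp σ (fun i => ∏ j, (X (Sum.inl i) - X (Sum.inr (τ j)) :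
    MvPolynomial (Fin p ⊕ Fin q) ℂ))]
  exact Finset.prod_congr rfl fun i _ => Equiv.prod_comp τ (fun j => (X (Sum.inl i) -
    X (Sum.inr j) : MvPolynomial (Fin p ⊕ Fin q) ℂ))

lemma X_sub_X_ne_zero {p q : ℕ} (i : Fin p) (j : Fin q) :
    (X (Sum.inl i) - X (Sum.inr j) : MvPolynomial (Fin p ⊕ Fin q) ℂ) ≠ 0 := by
  rw [sub_ne_zero]
  intro h
  exact Sum.inl_ne_inr (X_injective h)

lemma resPoly_ne_zero (p q : ℕ) : resPoly p q ≠ 0 :=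
  Finset.prod_ne_zero_iff.2 fun i _ => Finset.prod_ne_zero_iff.2 fun j _ => X_sub_X_ne_zero i j

/-! ### Multiples of the resultant lie in the algebra generated by the `hₙ` -/

lemma jtMatrix_det_mem (p q : ℕ) (a : Fin p → ℕ) :
    (jtMatrix (K := MvPolynomial (Fin p ⊕ Fin q) ℂ) (fun i => X (Sum.inl i))
      (fun j => X (Sum.inr j)) a).det ∈ genAlg p q := by
  rw [Matrix.det_apply']
  refine sum_mem fun σ _ => mul_mem (intCast_mem _ _) (prod_mem fun k _ => ?_)
  simp only [jtMatrix, Matrix.of_apply]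
  split_ifs
  · exact hPoly_mem_genAlg p q _
  · exact zero_mem _

/-- Antisymmetrization. -/
noncomputable def antisym (p : ℕ) : MvPolynomial (Fin p) ℂ →ₗ[ℂ] MvPolynomial (Fin p) ℂ :=
  ∑ σ : Equiv.Perm (Fin p), (Equiv.Perm.sign σ : ℤ) • (rename σ).toLinearMap

lemma antisym_apply (p : ℕ) (f : MvPolynomial (Fin p) ℂ) :
    antisym p f = ∑ σ : Equiv.Perm (Fin p), (Equiv.Perm.sign σ : ℤ) • rename σ f := by
  simp [antisym]

lemma monomial_eq_C_mul_prod {ι : Type*} [Fintype ι] (m : ι →₀ ℕ) (c : ℂ) :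
    monomial m c = C c * ∏ k, (X k : MvPolynomial ι ℂ) ^ m k := by
  rw [monomial_eq, Finsupp.prod_fintype]
  simp

lemma antisym_monomial (p : ℕ) (m : Fin p →₀ ℕ) (c : ℂ) :
    antisym p (monomial m c) = C c * (Matrix.of fun k i => X i ^ m k :
      Matrix (Fin p) (Fin p) (MvPolynomial (Fin p) ℂ)).det := by
  rw [antisym_apply, ← Matrix.det_transpose, Matrix.det_apply', Finset.mul_sum]
  refine Finset.sum_congr rfl fun σ _ => ?_
  rw [monomial_eq_C_mul_prod, zsmul_eq_mul]
  simp only [map_mul, map_prod, map_pow, rename_X, rename_C, Matrix.transpose_apply,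
    Matrix.of_apply]
  ring

lemma exists_resPoly_mul_antisym (p q : ℕ) (f : MvPolynomial (Fin p) ℂ) :
    ∃ b ∈ genAlg p q, resPoly p q * rename Sum.inl (antisym p f) =
      b * rename Sum.inl (Matrix.vandermonde (X : Fin p → MvPolynomial (Fin p) ℂ)).det := by
  induction f using MvPolynomial.induction_on' with
  | monomial m c =>
    refine ⟨C c * _, mul_mem (Subalgebra.algebraMap_mem _ c) (jtMatrix_det_mem p q m), ?_⟩
    rw [antisym_monomial, map_mul, rename_C, mul_left_comm, mul_assoc]
    congr 1
    have h := resultant_mul_alternant (K := MvPolynomial (Fin p ⊕ Fin q) ℂ)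
      (fun i => X (Sum.inl i)) (fun j => X (Sum.inr j)) m
    have e1 : rename (Sum.inl : Fin p → Fin p ⊕ Fin q) (Matrix.of fun k i => X i ^ m k :
        Matrix (Fin p) (Fin p) (MvPolynomial (Fin p) ℂ)).det =
        (Matrix.of fun k i => X (Sum.inl i) ^ m k :
          Matrix (Fin p) (Fin p) (MvPolynomial (Fin p ⊕ Fin q) ℂ)).det := by
      rw [AlgHom.map_det]
      congr 1
      ext1 k i
      simp
    have e2 : rename (Sum.inl : Fin p → Fin p ⊕ Fin q)
        (Matrix.vandermonde (X : Fin p → MvPolynomial (Fin p) ℂ)).det =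
        (Matrix.vandermonde fun i => (X (Sum.inl i) : MvPolynomial (Fin p ⊕ Fin q) ℂ)).det := by
      rw [AlgHom.map_det]
      congr 1
      ext1 k i
      simp [Matrix.vandermonde]
    rw [e1, e2]
    exact h
  | add f g hf hg =>
    obtain ⟨b, hb, hb'⟩ := hf
    obtain ⟨c, hc, hc'⟩ := hg
    refine ⟨b + c, add_mem hb hc, ?_⟩
    rw [map_add, map_add, mul_add, hb', hc', add_mul]

lemma rename_vandermonde (p : ℕ) (σ : Equiv.Perm (Fin p)) :
    rename σ (Matrix.vandermonde (X : Fin p → MvPolynomial (Fin p) ℂ)).det =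
      (Equiv.Perm.sign σ : ℤ) * (Matrix.vandermonde (X : Fin p → MvPolynomial (Fin p) ℂ)).det := by
  rw [AlgHom.map_det, ← Matrix.det_permute]
  congr 1
  ext1 k i
  simp [Matrix.vandermonde]

/-- `∏ (uᵢ - vⱼ) g(u)` is generated by the `hₙ` for symmetric `g`: the antisymmetric polynomial
`gΔ`, with `Δ` the Vandermonde determinant, is a combination of alternants. -/
lemma resPoly_mul_sym_left {p q : ℕ} {g : MvPolynomial (Fin p) ℂ} (hg : g.IsSymmetric) :
    resPoly p q * rename Sum.inl g ∈ genAlg p q := by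
  set Δ := (Matrix.vandermonde (X : Fin p → MvPolynomial (Fin p) ℂ)).det with hΔ
  have hΔ0 : Δ ≠ 0 := Matrix.det_vandermonde_ne_zero_iff.2 X_injective
  obtain ⟨b, hb, h⟩ := exists_resPoly_mul_antisym p q (g * Δ)
  have h1 : antisym p (g * Δ) = (p.factorial : ℂ) • (g * Δ) := by
    rw [antisym_apply, Finset.sum_congr rfl (g := fun _ => g * Δ)]
    · rw [Finset.sum_const, Finset.card_univ, Fintype.card_perm, Fintype.card_fin,
        Nat.cast_smul_eq_nsmul]
    · intro σ _
      have hs : ((Equiv.Perm.sign σ : ℤ) : MvPolynomial (Fin p) ℂ) *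
          ((Equiv.Perm.sign σ : ℤ) : MvPolynomial (Fin p) ℂ) = 1 := by
        rw [← Int.cast_mul, Int.units_coe_mul_self, Int.cast_one]
      rw [map_mul, hg σ, rename_vandermonde, zsmul_eq_mul, ← hΔ]
      linear_combination (g * Δ) * hs
  have h2 : resPoly p q * rename Sum.inl g = (p.factorial : ℂ)⁻¹ • b := by
    have h0 : rename (Sum.inl : Fin p → Fin p ⊕ Fin q) Δ ≠ 0 := by
      rw [Ne, map_eq_zero_iff _ (rename_injective _ Sum.inl_injective)]
      exact hΔ0
    apply mul_right_cancel₀ h0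
    rw [smul_mul_assoc, ← h, h1, map_smul, map_mul, mul_smul_comm, smul_smul,
      inv_mul_cancel₀ (Nat.cast_ne_zero.2 p.factorial_ne_zero), one_smul, mul_assoc]
  rw [h2]
  exact Subalgebra.smul_mem _ hb _

lemma rename_inl_esymm (p q k : ℕ) :
    PowerSeries.coeff k (∏ i : Fin p, (1 - PowerSeries.C
      (X (Sum.inl i) : MvPolynomial (Fin p ⊕ Fin q) ℂ) * PowerSeries.X)) =
      rename Sum.inl ((-1) ^ k * esymm (Fin p) ℂ k) := by
  rw [coeff_prod_linear_eq_esymm, esymm]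
  simp

lemma rename_inr_esymm (p q k : ℕ) :
    PowerSeries.coeff k (∏ j : Fin q, (1 - PowerSeries.C
      (X (Sum.inr j) : MvPolynomial (Fin p ⊕ Fin q) ℂ) * PowerSeries.X)) =
      rename Sum.inr ((-1) ^ k * esymm (Fin q) ℂ k) := by
  rw [coeff_prod_linear_eq_esymm, esymm]
  simp

lemma isSymmetric_sign_esymm (p k : ℕ) : ((-1) ^ k * esymm (Fin p) ℂ k).IsSymmetric :=
  IsSymmetric.mul (fun σ => by simp) (esymm_isSymmetric _ _ _)

/-- `∏ (uᵢ - vⱼ) g(u) h(v)` is generated by the `hₙ`. The factors in `v` are brought in one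
elementary symmetric polynomial at a time, using `e(v) = h(u | v) e(u)` on generating series. -/
lemma resPoly_mul_sym_mul_sym {p q : ℕ} {g : MvPolynomial (Fin p) ℂ} (hg : g.IsSymmetric)
    {f : MvPolynomial (Fin q) ℂ} (hf : f.IsSymmetric) :
    resPoly p q * rename Sum.inl g * rename Sum.inr f ∈ genAlg p q := by
  obtain ⟨P, hP⟩ := esymmAlgHom_surjective (σ := Fin q) (R := ℂ) (n := q) (by simp) ⟨f, hf⟩
  have hP' : f = aeval (fun i : Fin q => esymm (Fin q) ℂ (i + 1)) P := by
    rw [← esymmAlgHom_apply, hP]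
  rw [hP']
  clear hP' hP hf f
  induction P using MvPolynomial.induction_on generalizing g with
  | C a =>
    rw [aeval_C, algebraMap_eq, rename_C]
    exact mul_mem (resPoly_mul_sym_left hg) (Subalgebra.algebraMap_mem _ a)
  | add P Q hP hQ =>
    rw [map_add, map_add, mul_add]
    exact add_mem (hP hg) (hQ hg)
  | mul_X P n hP =>
    rw [map_mul, aeval_X, map_mul]
    set k := (n : ℕ) + 1
    have h := congrArg (PowerSeries.coeff k) (genH_mul_prod
      (fun i : Fin p => (X (Sum.inl i) : MvPolynomial (Fin p ⊕ Fin q) ℂ))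
      (fun j : Fin q => X (Sum.inr j)))
    rw [rename_inr_esymm, PowerSeries.coeff_mul] at h
    have hk : rename (Sum.inr : Fin q → Fin p ⊕ Fin q) (esymm (Fin q) ℂ k) =
        (-1) ^ k * rename Sum.inr ((-1) ^ k * esymm (Fin q) ℂ k) := by
      rw [map_mul, ← mul_assoc, map_pow, map_neg, map_one, ← mul_pow]
      simp
    rw [hk, ← h, Finset.mul_sum, Finset.mul_sum, Finset.mul_sum]
    refine sum_mem fun x _ => ?_
    rw [rename_inl_esymm]
    have h3 := mul_mem (mul_mem (hP (hg.mul (isSymmetric_sign_esymm p x.2)))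
      (hPoly_mem_genAlg p q x.1)) (pow_mem (neg_mem (one_mem (genAlg p q))) k)
    convert h3 using 1
    rw [hPoly, map_mul _ g]
    ring

/-- Every multiple of `∏ (uᵢ - vⱼ)` by a polynomial symmetric in each block is generated by the
`hₙ`. -/
lemma resPoly_mul_mem {p q : ℕ} {F : MvPolynomial (Fin p ⊕ Fin q) ℂ} (hF : F ∈ symSub p q) :
    resPoly p q * F ∈ genAlg p q := by
  have key : ∀ F : MvPolynomial (Fin p ⊕ Fin q) ℂ, resPoly p q *
      ∑ σ : Equiv.Perm (Fin p), ∑ τ : Equiv.Perm (Fin q), rename (Sum.map σ τ) F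
        ∈ genAlg p q := by
    intro F
    induction F using MvPolynomial.induction_on' with
    | add f g hf hg =>
      simp only [map_add, Finset.sum_add_distrib, mul_add]
      exact add_mem hf hg
    | monomial m c =>
      have hsym : ∀ (n : ℕ) (f : MvPolynomial (Fin n) ℂ),
          (∑ σ : Equiv.Perm (Fin n), rename σ f).IsSymmetric := by
        intro n f σ
        rw [map_sum]
        simp only [rename_rename]
        exact Equiv.sum_comp (Equiv.mulLeft σ) (fun ρ : Equiv.Perm (Fin n) => rename (⇑ρ) f)
      have h := mul_mem (Subalgebra.algebraMap_mem (genAlg p q) c)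
        (resPoly_mul_sym_mul_sym (q := q) (hsym p (∏ i, X i ^ m (Sum.inl i)))
        (hsym q (∏ j, X j ^ m (Sum.inr j))))
      convert h using 1
      simp only [map_sum]
      rw [mul_assoc, Finset.sum_mul_sum, mul_left_comm]
      congr 1
      rw [Finset.mul_sum]
      refine Finset.sum_congr rfl fun σ _ => ?_
      rw [Finset.mul_sum]
      refine Finset.sum_congr rfl fun τ _ => ?_
      rw [monomial_eq_C_mul_prod, Fintype.prod_sum_type]
      simp [algebraMap_eq]
  have h := key F
  have hsum : ∑ σ : Equiv.Perm (Fin p), ∑ τ : Equiv.Perm (Fin q), rename (Sum.map σ τ) F =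
      ((p.factorial : ℂ) * (q.factorial : ℂ)) • F := by
    rw [Finset.sum_congr rfl fun σ _ => Finset.sum_congr rfl fun τ _ => hF σ τ]
    simp only [Finset.sum_const, Finset.card_univ, Fintype.card_perm, Fintype.card_fin,
      ← Nat.cast_smul_eq_nsmul ℂ, smul_smul]
  rw [hsum, mul_smul_comm] at h
  have h2 := Subalgebra.smul_mem _ h ((p.factorial : ℂ) * (q.factorial : ℂ))⁻¹
  rwa [smul_smul, inv_mul_cancel₀, one_smul] at h2
  exact mul_ne_zero (Nat.cast_ne_zero.2 p.factorial_ne_zero)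
    (Nat.cast_ne_zero.2 q.factorial_ne_zero)

/-! ### Homogeneous components -/

lemma coeff_aeval_line {ι : Type*} [Fintype ι] (Z : ι → ℂ) (f : MvPolynomial ι ℂ) (k : ℕ) :
    (aeval (fun i => Polynomial.C (Z i) * Polynomial.X) f : Polynomial ℂ).coeff k =
      eval Z (homogeneousComponent k f) := by
  induction f using MvPolynomial.induction_on' with
  | add f g hf hg => simp [hf, hg]
  | monomial m c =>
    have h1 : (aeval (fun i => Polynomial.C (Z i) * Polynomial.X) (monomial m c) :
        Polynomial ℂ) = Polynomial.C (eval Z (monomial m c)) * Polynomial.X ^ m.degree := by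
      rw [monomial_eq_C_mul_prod]
      simp only [map_mul, map_prod, map_pow, aeval_C, aeval_X, mul_pow, Finset.prod_mul_distrib,
        Finset.prod_pow_eq_pow_sum, eval_C, eval_X, Finsupp.degree_eq_sum,
        Polynomial.algebraMap_eq, mul_assoc]
    rw [h1, Polynomial.coeff_C_mul, Polynomial.coeff_X_pow,
      homogeneousComponent_of_mem (isHomogeneous_monomial c rfl)]
    split_ifs <;> simp

lemma eval_aeval_line {ι : Type*} (Z : ι → ℂ) (f : MvPolynomial ι ℂ) (c : ℂ) :
    (aeval (fun i => Polynomial.C (Z i) * Polynomial.X) f : Polynomial ℂ).eval c =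
      eval (c • Z) f := by
  induction f using MvPolynomial.induction_on with
  | C a => simp
  | add f g hf hg => simp [hf, hg]
  | mul_X f n hf => simp [hf, mul_comm c]

/-- An identity between values along two lines through the origin splits into identities
between the values of the homogeneous components. -/
lemma eval_homogeneousComponent_eq {ι κ : Type*} [Fintype ι] [Fintype κ]
    {f : MvPolynomial ι ℂ} {g : MvPolynomial κ ℂ} {Z : ι → ℂ} {W : κ → ℂ}
    (h : ∀ c : ℂ, eval (c • Z) f = eval (c • W) g) (k : ℕ) :
    eval Z (homogeneousComponent k f) = eval W (homogeneousComponent k g) := by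
  rw [← coeff_aeval_line, ← coeff_aeval_line]
  congr 1
  refine Polynomial.funext fun c => ?_
  rw [eval_aeval_line, eval_aeval_line, h]

/-- The part of degree at most `d`. -/
noncomputable def trunc {ι : Type*} (d : ℕ) (f : MvPolynomial ι ℂ) : MvPolynomial ι ℂ :=
  ∑ k ∈ Finset.range (d + 1), homogeneousComponent k f

lemma totalDegree_trunc_le {ι : Type*} (d : ℕ) (f : MvPolynomial ι ℂ) :
    (trunc d f).totalDegree ≤ d := by
  refine totalDegree_finsetSum_le fun k hk => ?_
  have := (homogeneousComponent_isHomogeneous k f).totalDegree_le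
  have := Finset.mem_range.1 hk
  omega

lemma trunc_eq_self {ι : Type*} {d : ℕ} {f : MvPolynomial ι ℂ} (h : f.totalDegree ≤ d) :
    trunc d f = f := by
  conv_rhs => rw [← sum_homogeneousComponent (φ := f)]
  refine (Finset.sum_subset (Finset.range_mono (by omega)) fun k _ hk => ?_).symm
  exact homogeneousComponent_eq_zero _ _ (by simpa [Nat.lt_succ_iff] using hk)

lemma trunc_mem_superAlg {p q d : ℕ} {f : MvPolynomial (Fin p ⊕ Fin q) ℂ}
    (hf : f ∈ superAlg p q) : trunc d f ∈ superAlg p q := by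
  refine sum_mem fun k _ => ⟨fun σ τ Z => ?_, fun i j Z t h => ?_⟩
  · exact eval_homogeneousComponent_eq (fun c => hf.1 σ τ (c • Z)) k
  · refine eval_homogeneousComponent_eq (fun c => ?_) k
    rw [← hf.2 i j (c • Z) (c * t) (by simp [h])]
    congr 2
    ext v
    simp only [Pi.smul_apply, Function.update_apply, smul_eq_mul]
    split_ifs <;> rfl

/-! ### Setting one variable of each block to zero -/

/-- The point obtained by prepending a zero to each block. -/
def consPt {p q : ℕ} (Z : Fin p ⊕ Fin q → ℂ) : Fin (p + 1) ⊕ Fin (q + 1) → ℂ :=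
  Sum.elim (Fin.cons 0 (Z ∘ Sum.inl)) (Fin.cons 0 (Z ∘ Sum.inr))

/-- The restriction map, setting the first variable of each block to zero. -/
noncomputable def restr (p q : ℕ) :
    MvPolynomial (Fin (p + 1) ⊕ Fin (q + 1)) ℂ →ₐ[ℂ] MvPolynomial (Fin p ⊕ Fin q) ℂ :=
  aeval (Sum.elim (Fin.cons 0 fun i => X (Sum.inl i)) (Fin.cons 0 fun j => X (Sum.inr j)))

lemma eval_restr {p q : ℕ} (f : MvPolynomial (Fin (p + 1) ⊕ Fin (q + 1)) ℂ)
    (Z : Fin p ⊕ Fin q → ℂ) : eval Z (restr p q f) = eval (consPt Z) f := by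
  induction f using MvPolynomial.induction_on with
  | C a => simp [restr]
  | add f g hf hg => simp [hf, hg]
  | mul_X f n hf =>
    rw [map_mul, map_mul, hf, map_mul, eval_X]
    congr 1
    rcases n with i | j
    · refine Fin.cases ?_ (fun i => ?_) i <;> simp [restr, consPt]
    · refine Fin.cases ?_ (fun j => ?_) j <;> simp [restr, consPt]

lemma restr_hPoly (p q n : ℕ) : restr p q (hPoly (p + 1) (q + 1) n) = hPoly p q n := by
  refine MvPolynomial.funext fun Z => ?_
  rw [eval_restr, eval_hPoly, eval_hPoly]
  exact congrArg (PowerSeries.coeff n) (genH_cons (Z ∘ Sum.inl) (Z ∘ Sum.inr) 0)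

lemma cons_comp_perm {n : ℕ} (u : Fin n → ℂ) (σ : Equiv.Perm (Fin n)) :
    (Fin.cons 0 u : Fin (n + 1) → ℂ) ∘ Equiv.Perm.decomposeFin.symm (0, σ) =
      Fin.cons 0 (u ∘ σ) := by
  ext i
  refine Fin.cases ?_ (fun i => ?_) i
  · simp
  · simp

lemma restr_mem {p q : ℕ} {f : MvPolynomial (Fin (p + 1) ⊕ Fin (q + 1)) ℂ}
    (hf : f ∈ superAlg (p + 1) (q + 1)) : restr p q f ∈ superAlg p q := by
  refine ⟨fun σ τ Z => ?_, fun i j Z t h => ?_⟩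
  · rw [eval_restr, eval_restr, ← hf.1 (Equiv.Perm.decomposeFin.symm (0, σ))
      (Equiv.Perm.decomposeFin.symm (0, τ)) (consPt Z)]
    congr 2
    have h1 := cons_comp_perm (Z ∘ Sum.inl) σ
    have h2 := cons_comp_perm (Z ∘ Sum.inr) τ
    ext v
    rcases v with v | v
    · exact (congrFun h1 v).symm
    · exact (congrFun h2 v).symm
  · rw [eval_restr, eval_restr, ← hf.2 i.succ j.succ (consPt Z) t (by simpa [consPt] using h)]
    congr 2
    ext v
    rcases v with v | v
    · refine Fin.cases ?_ (fun k => ?_) v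
      · simp only [consPt, Sum.elim_inl, Fin.cons_zero, Function.update_apply]
        simp [(Fin.succ_ne_zero i).symm]
      · simp only [consPt, Sum.elim_inl, Fin.cons_succ, Function.comp, Function.update_apply]
        simp
    · refine Fin.cases ?_ (fun k => ?_) v
      · simp only [consPt, Sum.elim_inr, Fin.cons_zero, Function.update_apply]
        simp [(Fin.succ_ne_zero j).symm]
      · simp only [consPt, Sum.elim_inr, Fin.cons_succ, Function.comp, Function.update_apply]
        simp

lemma restr_trunc {p q d : ℕ} (f : MvPolynomial (Fin (p + 1) ⊕ Fin (q + 1)) ℂ) :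
    restr p q (trunc d f) = trunc d (restr p q f) := by
  rw [trunc, trunc, map_sum]
  refine Finset.sum_congr rfl fun k _ => MvPolynomial.funext fun Z => ?_
  rw [eval_restr]
  refine eval_homogeneousComponent_eq (fun c => ?_) k
  rw [eval_restr]
  congr 2
  ext v
  rcases v with v | v
  · refine Fin.cases ?_ (fun k => ?_) v <;> simp [consPt]
  · refine Fin.cases ?_ (fun k => ?_) v <;> simp [consPt]

lemma eval_eq_zero_of_restr_eq_zero {p q : ℕ} {f : MvPolynomial (Fin (p + 1) ⊕ Fin (q + 1)) ℂ}
    (hf : f ∈ superAlg (p + 1) (q + 1)) (h0 : restr p q f = 0) (i : Fin (p + 1))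
    (j : Fin (q + 1)) (Z : Fin (p + 1) ⊕ Fin (q + 1) → ℂ) (h : Z (Sum.inl i) = Z (Sum.inr j)) :
    eval Z f = 0 := by
  rw [← hf.1 (Equiv.swap 0 i) (Equiv.swap 0 j), ← hf.2 0 0 _ 0 (by simpa using h)]
  set W := Function.update (Function.update (Z ∘ Sum.map (Equiv.swap 0 i) (Equiv.swap 0 j))
    (Sum.inl 0) 0) (Sum.inr 0) 0 with hW
  have h1 : W = consPt (fun v => W (Sum.map Fin.succ Fin.succ v)) := by
    ext v
    rcases v with v | v
    · refine Fin.cases ?_ (fun k => ?_) v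
      · simp [consPt, hW]
      · simp [consPt]
    · refine Fin.cases ?_ (fun k => ?_) v
      · simp [consPt, hW]
      · simp [consPt]
  rw [h1, ← eval_restr, h0, map_zero]

/-- A polynomial vanishing on the hyperplane where two variables agree is divisible by their
difference. -/
lemma X_sub_X_dvd {ι : Type*} [DecidableEq ι] (a b : ι) (f : MvPolynomial ι ℂ)
    (h : rename (Function.update id b a) f = 0) : (X a - X b) ∣ f := by
  rw [← Ideal.mem_span_singleton, ← sub_zero f, ← h]
  clear h
  induction f using MvPolynomial.induction_on with
  | C c => simp
  | add f g hf hg =>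
    rw [map_add, add_sub_add_comm]
    exact add_mem hf hg
  | mul_X f n hf =>
    rw [map_mul, rename_X]
    have h1 : (X n - X (Function.update id b a n) : MvPolynomial ι ℂ) ∈
        Ideal.span {(X a - X b : MvPolynomial ι ℂ)} := by
      by_cases hn : n = b
      · subst hn
        have h0 : (X a - X n : MvPolynomial ι ℂ) ∈ Ideal.span {(X a - X n : MvPolynomial ι ℂ)} :=
          Ideal.mem_span_singleton_self _
        rw [Function.update_self]
        have h1 := neg_mem h0
        rwa [neg_sub] at h1
      · simp [Function.update_of_ne hn]
    have h2 := add_mem (Ideal.mul_mem_right (X n) _ hf)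
      (Ideal.mul_mem_left _ (rename (Function.update id b a) f) h1)
    convert h2 using 1
    ring

lemma resPoly_dvd {p q : ℕ} {f : MvPolynomial (Fin p ⊕ Fin q) ℂ}
    (h : ∀ (i : Fin p) (j : Fin q) (Z : Fin p ⊕ Fin q → ℂ), Z (Sum.inl i) = Z (Sum.inr j) →
      eval Z f = 0) : resPoly p q ∣ f := by
  have key : ∀ S : Finset (Fin p × Fin q), (∏ x ∈ S, (X (Sum.inl x.1) - X (Sum.inr x.2) :
      MvPolynomial (Fin p ⊕ Fin q) ℂ)) ∣ f := by
    intro S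
    induction S using Finset.induction_on with
    | empty => simp
    | insert x S hx ih =>
      obtain ⟨i, j⟩ := x
      obtain ⟨F, hF⟩ := ih
      rw [Finset.prod_insert hx, hF, mul_comm]
      refine mul_dvd_mul_left _ (X_sub_X_dvd _ _ F ?_)
      have h1 : rename (Function.update id (Sum.inr j) (Sum.inl i)) f = 0 := by
        refine MvPolynomial.funext fun Z => ?_
        rw [eval_rename, map_zero]
        exact h i j _ (by simp)
      rw [hF, map_mul, mul_eq_zero] at h1
      refine h1.resolve_left ?_
      rw [map_prod, ← Ne, Finset.prod_ne_zero_iff]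
      rintro ⟨k, l⟩ hkl
      simp only [map_sub, rename_X]
      rw [Function.update_of_ne (by simp), id]
      by_cases hl : l = j
      · subst hl
        rw [Function.update_self, sub_ne_zero]
        intro h2
        have h3 : k = i := Sum.inl_injective (X_injective h2)
        subst h3
        exact hx hkl
      · rw [Function.update_of_ne (by simpa using hl)]
        exact X_sub_X_ne_zero k l
  have h2 := key Finset.univ
  rwa [← Finset.univ_product_univ, Finset.prod_product] at h2

/-- The kernel of the restriction map consists of multiples of `∏ (uᵢ - vⱼ)`: a supersymmetric
polynomial vanishing on `u₀ = v₀ = 0` vanishes wherever some `uᵢ` equals some `vⱼ`. -/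
lemma exists_of_restr_eq_zero {p q : ℕ} {f : MvPolynomial (Fin (p + 1) ⊕ Fin (q + 1)) ℂ}
    (hf : f ∈ superAlg (p + 1) (q + 1)) (h0 : restr p q f = 0) :
    ∃ F ∈ symSub (p + 1) (q + 1), f = resPoly (p + 1) (q + 1) * F := by
  obtain ⟨F, hF⟩ := resPoly_dvd (eval_eq_zero_of_restr_eq_zero hf h0)
  refine ⟨F, fun σ τ => ?_, hF⟩
  apply mul_left_cancel₀ (resPoly_ne_zero (p + 1) (q + 1))
  have h1 := mem_symSub_iff.2 hf.1 σ τ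
  rwa [hF, map_mul, resPoly_mem_symSub] at h1

lemma restr_resPoly_mul {p q : ℕ} (F : MvPolynomial (Fin (p + 1) ⊕ Fin (q + 1)) ℂ) :
    restr p q (resPoly (p + 1) (q + 1) * F) = 0 := by
  rw [map_mul, resPoly, Fin.prod_univ_succ, Fin.prod_univ_succ]
  simp [restr]

/-- Every supersymmetric polynomial is a polynomial in the `hₙ`. -/
theorem superAlg_le_genAlg (p q : ℕ) : superAlg p q ≤ genAlg p q := by
  induction p generalizing q with
  | zero =>
    intro f hf
    have h := resPoly_mul_mem (mem_symSub_iff.2 hf.1)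
    simpa [resPoly] using h
  | succ p ih =>
    intro f hf
    cases q with
    | zero =>
      have h := resPoly_mul_mem (mem_symSub_iff.2 hf.1)
      simpa [resPoly] using h
    | succ q =>
      obtain ⟨P, hP⟩ := ih q (restr_mem hf)
      have hb : aeval (hPoly (p + 1) (q + 1)) P ∈ genAlg (p + 1) (q + 1) := ⟨P, rfl⟩
      have hr : restr p q (aeval (hPoly (p + 1) (q + 1)) P) = restr p q f := by
        rw [← hP, ← AlgHom.comp_apply, comp_aeval]
        simp only [restr_hPoly]
        rfl
      obtain ⟨F, hF, hF'⟩ := exists_of_restr_eq_zero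
        (sub_mem hf (genAlg_le_superAlg _ _ hb)) (by rw [map_sub, hr, sub_self])
      rw [← sub_add_cancel f (aeval (hPoly (p + 1) (q + 1)) P), hF']
      exact add_mem (resPoly_mul_mem hF) hb

lemma exists_lift {p q : ℕ} {f : MvPolynomial (Fin p ⊕ Fin q) ℂ} (hf : f ∈ superAlg p q) :
    ∃ g ∈ superAlg (p + 1) (q + 1), restr p q g = f := by
  obtain ⟨P, rfl⟩ := superAlg_le_genAlg p q hf
  refine ⟨aeval (hPoly (p + 1) (q + 1)) P, genAlg_le_superAlg _ _ ⟨P, rfl⟩, ?_⟩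
  rw [← AlgHom.comp_apply, comp_aeval]
  simp only [restr_hPoly]
  rfl

/-! ### The recursion for dimensions -/

/-- Supersymmetric polynomials of total degree at most `d`. -/
noncomputable def superDeg (p q d : ℕ) : Submodule ℂ (MvPolynomial (Fin p ⊕ Fin q) ℂ) :=
  Subalgebra.toSubmodule (superAlg p q) ⊓ restrictTotalDegree (Fin p ⊕ Fin q) ℂ d

/-- Polynomials symmetric in each block, of total degree at most `d - N`; this is the zero space
when `d < N`. -/
noncomputable def symDeg (p q N d : ℕ) : Submodule ℂ (MvPolynomial (Fin p ⊕ Fin q) ℂ) :=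
  symSub p q ⊓ restrictSupport ℂ {m | m.degree + N ≤ d}

lemma mem_superDeg {p q d : ℕ} {f : MvPolynomial (Fin p ⊕ Fin q) ℂ} :
    f ∈ superDeg p q d ↔ f ∈ superAlg p q ∧ f.totalDegree ≤ d := by
  rw [superDeg, Submodule.mem_inf, mem_restrictTotalDegree, Subalgebra.mem_toSubmodule]

lemma mem_symDeg {p q N d : ℕ} {f : MvPolynomial (Fin p ⊕ Fin q) ℂ} :
    f ∈ symDeg p q N d ↔ f ∈ symSub p q ∧ (f = 0 ∨ f.totalDegree + N ≤ d) := by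
  rw [symDeg, Submodule.mem_inf, mem_restrictSupport_iff]
  refine and_congr_right fun _ => ?_
  by_cases hf : f = 0
  · simp [hf]
  simp only [hf, false_or]
  constructor
  · intro h
    obtain ⟨m, hm, hm'⟩ := Finset.exists_mem_eq_sup f.support (support_nonempty.2 hf)
      (fun m => m.sum fun _ e => e)
    rw [totalDegree, hm']
    exact h hm
  · intro h m hm
    have h2 : m.degree ≤ f.totalDegree := le_totalDegree hm
    have : m.degree + N ≤ d := by omega
    exact this

lemma symDeg_eq_superDeg {p q : ℕ} (h : p = 0 ∨ q = 0) (d : ℕ) :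
    symDeg p q 0 d = superDeg p q d := by
  ext f
  rw [mem_symDeg, mem_superDeg]
  have h1 : f ∈ symSub p q ↔ f ∈ superAlg p q := by
    rw [mem_symSub_iff]
    refine ⟨fun hf => ⟨hf, fun i j => ?_⟩, fun hf => hf.1⟩
    rcases h with rfl | rfl
    · exact i.elim0
    · exact j.elim0
  rw [h1, add_zero]
  refine and_congr_right fun _ => ⟨?_, Or.inr⟩
  rintro (rfl | h)
  · simp
  · exact h

lemma totalDegree_resPoly (p q : ℕ) : (resPoly p q).totalDegree = p * q := by
  refine IsHomogeneous.totalDegree ?_ (resPoly_ne_zero p q)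
  have h : ∀ i : Fin p, (∏ j : Fin q, (X (Sum.inl i) - X (Sum.inr j) :
      MvPolynomial (Fin p ⊕ Fin q) ℂ)).IsHomogeneous q := by
    intro i
    have := IsHomogeneous.prod Finset.univ (fun j : Fin q => (X (Sum.inl i) - X (Sum.inr j) :
      MvPolynomial (Fin p ⊕ Fin q) ℂ)) (fun _ => 1)
      (fun j _ => (isHomogeneous_X ℂ _).sub (isHomogeneous_X ℂ _))
    simpa using this
  have := IsHomogeneous.prod Finset.univ _ (fun _ => q) (fun i (_ : i ∈ Finset.univ) => h i)
  simpa [resPoly] using this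

/-- Rank–nullity for the restriction map, whose kernel consists of the multiples of
`∏ (uᵢ - vⱼ)`. -/
lemma rank_superDeg_succ (p q d : ℕ) :
    Module.rank ℂ (superDeg (p + 1) (q + 1) d) =
      Module.rank ℂ (superDeg p q d) +
        Module.rank ℂ (symDeg (p + 1) (q + 1) ((p + 1) * (q + 1)) d) := by
  have hdeg : ∀ {f}, f ∈ superDeg (p + 1) (q + 1) d → restr p q f ∈ superDeg p q d := by
    intro f hf
    rw [mem_superDeg] at hf ⊢
    refine ⟨restr_mem hf.1, ?_⟩
    rw [← trunc_eq_self hf.2, restr_trunc]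
    exact totalDegree_trunc_le _ _
  let L : superDeg (p + 1) (q + 1) d →ₗ[ℂ] superDeg p q d :=
    (restr p q).toLinearMap.restrict fun f hf => hdeg hf
  have hL : Function.Surjective L := by
    rintro ⟨f, hf⟩
    rw [mem_superDeg] at hf
    obtain ⟨g, hg, rfl⟩ := exists_lift hf.1
    refine ⟨⟨trunc d g, mem_superDeg.2 ⟨trunc_mem_superAlg hg, totalDegree_trunc_le _ _⟩⟩, ?_⟩
    apply Subtype.ext
    change restr p q (trunc d g) = restr p q g
    rw [restr_trunc, trunc_eq_self hf.2]
  have hmul : ∀ {F}, F ∈ symSub (p + 1) (q + 1) →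
      (resPoly (p + 1) (q + 1) * F ∈ superDeg (p + 1) (q + 1) d ↔
        (F = 0 ∨ F.totalDegree + (p + 1) * (q + 1) ≤ d)) := by
    intro F hF
    rw [mem_superDeg]
    have h1 := genAlg_le_superAlg _ _ (resPoly_mul_mem hF)
    by_cases hF0 : F = 0
    · simp [hF0]
    · rw [totalDegree_mul_of_isDomain (resPoly_ne_zero _ _) hF0, totalDegree_resPoly]
      simp [h1, hF0, add_comm]
  let M : symDeg (p + 1) (q + 1) ((p + 1) * (q + 1)) d →ₗ[ℂ] superDeg (p + 1) (q + 1) d :=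
    (LinearMap.mulLeft ℂ (resPoly (p + 1) (q + 1))).restrict fun F hF =>
      (hmul (mem_symDeg.1 hF).1).2 (mem_symDeg.1 hF).2
  have hM : Function.Injective M := by
    rintro ⟨F, hF⟩ ⟨G, hG⟩ h
    have h1 : resPoly (p + 1) (q + 1) * F = resPoly (p + 1) (q + 1) * G :=
      congrArg Subtype.val h
    exact Subtype.ext (mul_left_cancel₀ (resPoly_ne_zero _ _) h1)
  have hker : LinearMap.ker L = LinearMap.range M := by
    ext ⟨f, hf⟩
    rw [LinearMap.mem_ker, LinearMap.mem_range]
    constructor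
    · intro h
      obtain ⟨F, hF, rfl⟩ := exists_of_restr_eq_zero (mem_superDeg.1 hf).1
        (congrArg Subtype.val h)
      exact ⟨⟨F, mem_symDeg.2 ⟨hF, (hmul hF).1 hf⟩⟩, rfl⟩
    · rintro ⟨⟨F, hF⟩, h⟩
      have h1 : resPoly (p + 1) (q + 1) * F = f := congrArg Subtype.val h
      apply Subtype.ext
      change restr p q f = 0
      rw [← h1, restr_resPoly_mul]
  rw [LinearMap.rank_eq_of_surjective hL, hker, (LinearEquiv.ofInjective M hM).rank_eq]

/-! ### Polynomials symmetric in two blocks of variables -/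

/-- Pairs of partitions with at most `p` and at most `q` parts and of total size at most
`d - N`; there are none when `d < N`. -/
def pairSet (p q N d : ℕ) : Set ((Fin p → ℕ) × (Fin q → ℕ)) :=
  {x | Antitone x.1 ∧ Antitone x.2 ∧ ∑ i, x.1 i + ∑ j, x.2 j + N ≤ d}

lemma le_of_sum_le {p q d : ℕ} {x : (Fin p → ℕ) × (Fin q → ℕ)}
    (h : ∑ i, x.1 i + ∑ j, x.2 j ≤ d) : x ≤ (fun _ => d, fun _ => d) := by
  constructor
  · intro i
    have := Finset.single_le_sum (f := x.1) (fun _ _ => Nat.zero_le _) (Finset.mem_univ i)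
    change x.1 i ≤ d
    omega
  · intro j
    have := Finset.single_le_sum (f := x.2) (fun _ _ => Nat.zero_le _) (Finset.mem_univ j)
    change x.2 j ≤ d
    omega

instance (p q N d : ℕ) : Finite (pairSet p q N d) := by
  classical
  refine Set.Finite.to_subtype ((Set.finite_Iic ((fun _ => d, fun _ => d) :
    (Fin p → ℕ) × (Fin q → ℕ))).subset fun x hx => le_of_sum_le ?_)
  have := hx.2.2
  omega

/-- The exponent vector with blocks `x.1` and `x.2`. -/
noncomputable def expo {p q : ℕ} (x : (Fin p → ℕ) × (Fin q → ℕ)) : Fin p ⊕ Fin q →₀ ℕ :=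
  Finsupp.equivFunOnFinite.symm (Sum.elim x.1 x.2)

lemma expo_injective {p q : ℕ} : Function.Injective (expo (p := p) (q := q)) := by
  intro x y h
  have h1 := Finsupp.equivFunOnFinite.symm.injective h
  refine Prod.ext ?_ ?_
  · funext i; exact congrFun h1 (Sum.inl i)
  · funext i; exact congrFun h1 (Sum.inr i)

lemma exists_expo {p q : ℕ} (m : Fin p ⊕ Fin q →₀ ℕ) : ∃ x, expo x = m := by
  refine ⟨(fun i => m (Sum.inl i), fun j => m (Sum.inr j)), ?_⟩
  ext (i | j) <;> simp [expo]

lemma degree_expo {p q : ℕ} (x : (Fin p → ℕ) × (Fin q → ℕ)) :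
    (expo x).degree = ∑ i, x.1 i + ∑ j, x.2 j := by
  rw [Finsupp.degree_eq_sum, Fintype.sum_sum_type]
  simp [expo]

lemma coeff_expo_rename {p q : ℕ} (σ : Equiv.Perm (Fin p)) (τ : Equiv.Perm (Fin q))
    (f : MvPolynomial (Fin p ⊕ Fin q) ℂ) (x : (Fin p → ℕ) × (Fin q → ℕ)) :
    coeff (expo x) (rename (Sum.map σ τ) f) = coeff (expo (x.1 ∘ σ, x.2 ∘ τ)) f := by
  have hi : Function.Injective (Sum.map σ τ) := σ.injective.sumMap τ.injective
  rw [← coeff_rename_mapDomain _ hi f]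
  congr 1
  ext (i | j)
  · rw [← σ.apply_symm_apply i, ← Sum.map_inl (f := σ) (g := τ), Finsupp.mapDomain_apply hi]
    simp [expo]
  · rw [← τ.apply_symm_apply j, ← Sum.map_inr (f := σ) (g := τ), Finsupp.mapDomain_apply hi]
    simp [expo]

/-- The weakly decreasing rearrangement of a tuple. -/
def sortDesc {n : ℕ} (a : Fin n → ℕ) : Fin n → ℕ := a ∘ (Fin.revPerm.trans (Tuple.sort a))

lemma antitone_sortDesc {n : ℕ} (a : Fin n → ℕ) : Antitone (sortDesc a) := by
  intro i j h
  exact Tuple.monotone_sort a (Fin.rev_le_rev.2 h)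

lemma sortDesc_comp {n : ℕ} (a : Fin n → ℕ) (σ : Equiv.Perm (Fin n)) :
    sortDesc (a ∘ σ) = sortDesc a := by
  have h := antitone_sortDesc (a ∘ σ)
  unfold sortDesc at h ⊢
  rw [Function.comp_assoc, ← Equiv.coe_trans] at h ⊢
  exact Tuple.unique_antitone h (antitone_sortDesc a)

lemma sortDesc_of_antitone {n : ℕ} {a : Fin n → ℕ} (h : Antitone a) : sortDesc a = a :=
  Tuple.unique_antitone (τ := Equiv.refl _) (antitone_sortDesc a) h

lemma sum_sortDesc {n : ℕ} (a : Fin n → ℕ) : ∑ i, sortDesc a i = ∑ i, a i :=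
  Equiv.sum_comp _ a

/-- The coefficients at weakly decreasing exponents are linear coordinates on the space of
polynomials symmetric in two blocks of variables. -/
lemma rank_symDeg (p q N d : ℕ) :
    Module.rank ℂ (symDeg p q N d) = Nat.card (pairSet p q N d) := by
  classical
  let L : symDeg p q N d →ₗ[ℂ] (pairSet p q N d → ℂ) :=
    LinearMap.pi fun x => (lcoeff ℂ (expo x.1)).comp (symDeg p q N d).subtype
  have hLa : ∀ f x, L f x = coeff (expo x.1) f.1 := fun f x => rfl
  have hinj : Function.Injective L := by
    rw [injective_iff_map_eq_zero]
    rintro ⟨f, hf⟩ h0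
    apply Subtype.ext
    change f = 0
    have hs := (mem_symDeg.1 hf).1
    have hsupp := (mem_restrictSupport_iff ℂ).1 hf.2
    ext m
    rw [coeff_zero]
    by_contra hm
    obtain ⟨x, rfl⟩ := exists_expo m
    have h1 : ∑ i, x.1 i + ∑ j, x.2 j + N ≤ d := by
      rw [← degree_expo]
      exact hsupp (mem_support_iff.2 hm)
    have h2 := congrFun h0 ⟨(sortDesc x.1, sortDesc x.2), antitone_sortDesc _,
      antitone_sortDesc _, by simpa only [sum_sortDesc] using h1⟩
    rw [hLa] at h2
    apply hm
    rw [← hs (Fin.revPerm.trans (Tuple.sort x.1)) (Fin.revPerm.trans (Tuple.sort x.2)),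
      coeff_expo_rename]
    exact h2
  have hsurj : Function.Surjective L := by
    intro c
    let C : (Fin p → ℕ) × (Fin q → ℕ) → ℂ := fun x =>
      if h : (sortDesc x.1, sortDesc x.2) ∈ pairSet p q N d then c ⟨_, h⟩ else 0
    have hC0 : ∀ x, C x ≠ 0 → ∑ i, x.1 i + ∑ j, x.2 j + N ≤ d := by
      intro x hx
      by_contra h
      apply hx
      refine dif_neg fun h' => h ?_
      simpa only [sum_sortDesc] using h'.2.2
    let f : MvPolynomial (Fin p ⊕ Fin q) ℂ :=
      ∑ x ∈ Finset.Iic ((fun _ => d, fun _ => d) : (Fin p → ℕ) × (Fin q → ℕ)),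
        monomial (expo x) (C x)
    have hf : ∀ x, coeff (expo x) f = C x := by
      intro x
      simp only [f, coeff_sum, coeff_monomial, expo_injective.eq_iff, Finset.sum_ite_eq']
      split_ifs with hx
      · rfl
      · by_contra h
        apply hx
        have := hC0 x (Ne.symm h)
        exact Finset.mem_Iic.2 (le_of_sum_le (by omega))
    refine ⟨⟨f, ⟨?_, (mem_restrictSupport_iff ℂ).2 ?_⟩⟩, ?_⟩
    · intro σ τ
      ext m
      obtain ⟨x, rfl⟩ := exists_expo m
      rw [coeff_expo_rename, hf, hf]
      simp only [C, sortDesc_comp]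
    · intro m hm
      obtain ⟨x, rfl⟩ := exists_expo m
      have h1 := mem_support_iff.1 hm
      rw [hf] at h1
      have h2 := hC0 x h1
      rw [← degree_expo] at h2
      exact h2
    · funext ⟨x, hx⟩
      rw [hLa]
      refine (hf x).trans ?_
      have h1 : (sortDesc x.1, sortDesc x.2) = x :=
        Prod.ext (sortDesc_of_antitone hx.1) (sortDesc_of_antitone hx.2.1)
      simp only [C]
      rw [dif_pos (by rw [h1]; exact hx)]
      congr 1
      exact Subtype.ext h1
  have := Fintype.ofFinite (pairSet p q N d)
  rw [(LinearEquiv.ofBijective L ⟨hinj, hsurj⟩).rank_eq, rank_fun', Nat.card_eq_fintype_card]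

/-! ### From even to ordinary supersymmetric polynomials -/

/-- A polynomial invariant under a shift by one is constant. -/
lemma eval_eq_of_periodic (P : Polynomial ℂ) (h : ∀ t, P.eval (t + 1) = P.eval t) (s t : ℂ) :
    P.eval s = P.eval t := by
  have h1 : ∀ n : ℕ, P.eval (n : ℂ) = P.eval 0 := by
    intro n
    induction n with
    | zero => simp
    | succ n ih => rw [Nat.cast_succ, h, ih]
  have h2 : P = Polynomial.C (P.eval 0) := by
    apply Polynomial.eq_of_infinite_eval_eq
    refine (Set.infinite_range_of_injective (Nat.cast_injective (R := ℂ))).mono ?_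
    rintro _ ⟨n, rfl⟩
    simp [h1 n]
  rw [h2]
  simp

/-- A polynomial invariant under all sign changes involves only even exponents. -/
lemma exists_expand_of_even {ι : Type*} [DecidableEq ι] (f : MvPolynomial ι ℂ)
    (h : ∀ (v : ι) (Z : ι → ℂ), eval (Function.update Z v (-(Z v))) f = eval Z f) :
    ∃ g, expand 2 g = f := by
  have hc : ∀ (v : ι) (g : MvPolynomial ι ℂ) (m : ι →₀ ℕ),
      coeff m (aeval (fun w => if w = v then -X w else X w : ι → MvPolynomial ι ℂ) g) =
        (-1) ^ m v * coeff m g := by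
    intro v g m
    induction g using MvPolynomial.induction_on' with
    | monomial n c =>
      have : aeval (fun w => if w = v then -X w else X w : ι → MvPolynomial ι ℂ)
          (monomial n c) = monomial n ((-1) ^ n v * c) := by
        rw [aeval_monomial, monomial_eq, map_mul, algebraMap_eq, mul_comm (C _) (C c), mul_assoc]
        congr 1
        have h1 : ∀ w k, (if w = v then -X w else X w : MvPolynomial ι ℂ) ^ k =
            (if w = v then (-1) ^ k else 1) * X w ^ k := by
          intro w k
          split_ifs
          · rw [neg_pow]
          · rw [one_mul]
        simp only [h1]
        rw [Finsupp.prod_mul]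
        congr 1
        rw [Finsupp.prod_ite_eq']
        split_ifs with hv
        · simp
        · rw [Finsupp.notMem_support_iff.1 hv]; simp
      rw [this, coeff_monomial, coeff_monomial]
      split_ifs with hm
      · rw [hm]
      · simp
    | add g1 g2 h1 h2 => rw [map_add, coeff_add, coeff_add, h1, h2, mul_add]
  have heven : ∀ m ∈ f.support, ∀ v, Even (m v) := by
    intro m hm v
    have h1 : aeval (fun w => if w = v then -X w else X w : ι → MvPolynomial ι ℂ) f = f := by
      refine MvPolynomial.funext fun Z => ?_
      rw [← h v Z, ← aeval_eq_eval, ← AlgHom.comp_apply, comp_aeval, aeval_eq_eval]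
      congr 2
      funext w
      by_cases hw : w = v
      · subst hw; simp
      · simp [hw]
    have h2 := hc v f m
    rw [h1] at h2
    by_contra ho
    rw [Nat.not_even_iff_odd] at ho
    rw [ho.neg_one_pow] at h2
    apply mem_support_iff.1 hm
    linear_combination h2 / 2
  have hmem : f ∈ (expand 2 : MvPolynomial ι ℂ →ₐ[ℂ] MvPolynomial ι ℂ).range := by
    rw [f.as_sum]
    refine sum_mem fun m hm => ?_
    refine ⟨monomial (m.mapRange (· / 2) rfl) (coeff m f), ?_⟩
    change expand 2 _ = _
    have h1 : 2 • m.mapRange (· / 2) rfl = m := by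
      refine Finsupp.ext fun v => ?_
      obtain ⟨k, hk⟩ := heven m hm v
      simp only [Finsupp.smul_apply, Finsupp.mapRange_apply, smul_eq_mul]
      omega
    rw [expand_monomial, h1]
  exact hmem

/-- Even supersymmetric polynomials of degree at most `2d` are the supersymmetric polynomials of
degree at most `d` in the squares of the variables. On the line `xᵢ = t`, `yⱼ = -t` the shift
condition says that a polynomial in `t` is periodic, hence constant. -/
lemma map_superDeg (p q d : ℕ) :
    (superDeg p q d).map (expand 2 : MvPolynomial (Fin p ⊕ Fin q) ℂ →ₐ[ℂ] _).toLinearMap =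
      LambdaZeroDeg p q d := by
  ext f
  constructor
  · rintro ⟨g, hg, rfl⟩
    rw [SetLike.mem_coe, mem_superDeg] at hg
    obtain ⟨⟨h1, h2⟩, h3⟩ := hg
    change expand 2 g ∈ _
    refine ⟨⟨fun σ Z => ?_, fun τ Z => ?_, fun v Z => ?_, fun i j Z h => ?_⟩, ?_⟩
    · simp only [eval_expand]
      have e : (Z ∘ Sum.map σ id) ^ 2 = (Z ^ 2) ∘ Sum.map σ (Equiv.refl _) := by
        ext (k | l) <;> simp
      rw [e, h1]
    · simp only [eval_expand]
      have e : (Z ∘ Sum.map id τ) ^ 2 = (Z ^ 2) ∘ Sum.map (Equiv.refl _) τ := by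
        ext (k | l) <;> simp
      rw [e, h1]
    · simp only [eval_expand]
      congr 2
      funext w
      by_cases hw : w = v
      · subst hw; simp
      · simp [Function.update_of_ne hw]
    · simp only [eval_expand]
      rw [← h2 i j (Z ^ 2) ((Z (Sum.inl i) + 1) ^ 2)
        (by simp only [Pi.pow_apply]; linear_combination (Z (Sum.inl i) - Z (Sum.inr j)) * h)]
      congr 2
      funext w
      rcases w with k | l
      · by_cases hk : k = i
        · subst hk; simp
        · simp [hk]
      · by_cases hl : l = j
        · subst hl
          simp only [Pi.pow_apply, reduceCtorEq, if_false, if_true, Function.update_self]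
          linear_combination (Z (Sum.inr l) - Z (Sum.inl i) - 2) * h
        · simp [hl]
    · rw [totalDegree_expand]
      omega
  · rintro ⟨⟨h1, h2, h3, h4⟩, h5⟩
    obtain ⟨g, rfl⟩ := exists_expand_of_even f h3
    refine ⟨g, mem_superDeg.2 ⟨⟨fun σ τ Z => ?_, fun i j Z t h => ?_⟩, ?_⟩, rfl⟩
    · choose W hW using fun k => IsAlgClosed.exists_pow_nat_eq (Z k) (n := 2) (by norm_num)
      obtain rfl : W ^ 2 = Z := funext hW
      have h6 := (h2 τ (W ∘ Sum.map σ id)).trans (h1 σ W)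
      simp only [eval_expand] at h6
      convert h6 using 3
      ext (k | l) <;> simp
    · choose W hW using fun k => IsAlgClosed.exists_pow_nat_eq (Z k) (n := 2) (by norm_num)
      let line : Fin p ⊕ Fin q → Polynomial ℂ := fun k =>
        if k = Sum.inl i then Polynomial.X else if k = Sum.inr j then -Polynomial.X
        else Polynomial.C (W k)
      let pt : ℂ → Fin p ⊕ Fin q → ℂ := fun s k =>
        if k = Sum.inl i then s else if k = Sum.inr j then -s else W k
      have hline : ∀ s, (aeval line (expand 2 g)).eval s = eval (pt s) (expand 2 g) := by
        intro s
        rw [← Polynomial.coe_aeval_eq_eval, ← AlgHom.comp_apply, comp_aeval, aeval_eq_eval]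
        congr 2
        funext k
        simp only [line, pt]
        split_ifs <;> simp
      have hper := eval_eq_of_periodic (aeval line (expand 2 g)) (fun s => by
        rw [hline, hline, ← h4 i j (pt s) (by simp [pt])]
        congr 2
        funext k
        simp only [pt]
        rcases k with k | l
        · by_cases hk : k = i
          · subst hk; simp
          · simp [hk]
        · by_cases hl : l = j
          · subst hl; simp; ring
          · simp [hl])
      obtain ⟨s, hs⟩ := IsAlgClosed.exists_pow_nat_eq t (n := 2) (by norm_num)
      have h6 := hper s (W (Sum.inl i))
      rw [hline, hline, eval_expand, eval_expand] at h6
      convert h6 using 2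
      · congr 1
        funext k
        simp only [pt, Pi.pow_apply, Function.update_apply]
        rcases k with k | l
        · by_cases hk : k = i
          · subst hk; simp [hs]
          · simp [hk, hW]
        · by_cases hl : l = j
          · subst hl; simp [hs]
          · simp [hl, hW]
      · congr 1
        funext k
        simp only [pt, Pi.pow_apply]
        rcases k with k | l
        · by_cases hk : k = i
          · subst hk; simp [hW]
          · simp [hk, hW]
        · by_cases hl : l = j
          · subst hl; simp [hW, h]
          · simp [hl, hW]
    · rw [totalDegree_expand] at h5
      omega

lemma rank_LambdaZeroDeg (p q d : ℕ) :
    Module.rank ℂ (LambdaZeroDeg p q d) = Module.rank ℂ (superDeg p q d) := by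
  rw [← map_superDeg]
  exact (Submodule.equivMapOfInjective _ (expand_injective (by norm_num)) _).rank_eq.symm

/-! ### Counting hook partitions -/

/-- Young diagrams with at most `d` cells whose cells all lie in the hook of the first `p` rows
and the first `q` columns. -/
def hookSet (p q d : ℕ) : Set YoungDiagram := {Y | (p, q) ∉ Y ∧ Y.card ≤ d}

/-- The members of `hookSet p q d` that contain the whole `p × q` rectangle. -/
def rectSet (p q d : ℕ) : Set YoungDiagram :=
  {Y | (∀ i < p, ∀ j < q, (i, j) ∈ Y) ∧ (p, q) ∉ Y ∧ Y.card ≤ d}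

lemma rowLen_eq_iff {Y : YoungDiagram} {i n : ℕ} : Y.rowLen i = n ↔ ∀ j, (i, j) ∈ Y ↔ j < n := by
  refine ⟨fun h j => by rw [YoungDiagram.mem_iff_lt_rowLen, h], fun h => ?_⟩
  refine eq_of_forall_lt_iff fun j => ?_
  rw [← YoungDiagram.mem_iff_lt_rowLen, h]

lemma colLen_eq_iff {Y : YoungDiagram} {j n : ℕ} : Y.colLen j = n ↔ ∀ i, (i, j) ∈ Y ↔ i < n := by
  refine ⟨fun h i => by rw [YoungDiagram.mem_iff_lt_colLen, h], fun h => ?_⟩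
  refine eq_of_forall_lt_iff fun i => ?_
  rw [← YoungDiagram.mem_iff_lt_colLen, h]

/-- The diagram attached to a hook partition. -/
def toDiagram {p q : ℕ} (lam : HookPartition p q) : YoungDiagram where
  cells := lam.part.support.biUnion fun i => {i} ×ˢ Finset.range (lam.part i)
  isLowerSet := by
    rintro ⟨i, j⟩ ⟨i', j'⟩ ⟨hi, hj⟩ h
    simp only [Finset.coe_biUnion, Set.mem_iUnion, Finset.mem_coe, Finset.mem_product,
      Finset.mem_singleton, Finset.mem_range, Finsupp.mem_support_iff, exists_prop] at h ⊢
    obtain ⟨_, h1, rfl, h2⟩ := h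
    have h3 := lam.antitone' hi
    simp only at hj h2 h3
    exact ⟨i', by omega, rfl, by omega⟩

lemma mem_toDiagram {p q : ℕ} {lam : HookPartition p q} {i j : ℕ} :
    (i, j) ∈ toDiagram lam ↔ j < lam.part i := by
  rw [← YoungDiagram.mem_cells]
  simp only [toDiagram, Finset.mem_biUnion, Finset.mem_product,
    Finset.mem_singleton, Finset.mem_range, Finsupp.mem_support_iff]
  constructor
  · rintro ⟨_, _, rfl, h⟩
    exact h
  · intro h
    exact ⟨i, by omega, rfl, h⟩

lemma rowLen_toDiagram {p q : ℕ} (lam : HookPartition p q) (i : ℕ) :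
    (toDiagram lam).rowLen i = lam.part i :=
  rowLen_eq_iff.2 fun _ => mem_toDiagram

lemma card_toDiagram {p q : ℕ} (lam : HookPartition p q) :
    (toDiagram lam).card = lam.size := by
  have h : Set.MapsTo Prod.fst ((toDiagram lam).cells : Set (ℕ × ℕ)) lam.part.support := by
    rintro ⟨i, j⟩ h
    have := mem_toDiagram.1 ((YoungDiagram.mem_cells _).1 h)
    exact Finsupp.mem_support_iff.2 (by simp only; omega)
  rw [YoungDiagram.card, Finset.card_eq_sum_card_fiberwise h]
  refine Finset.sum_congr rfl fun i _ => ?_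
  rw [← rowLen_toDiagram, YoungDiagram.rowLen_eq_card]
  rfl

lemma card_hookPartition (p q d : ℕ) :
    Nat.card {lam : HookPartition p q // lam.size ≤ d} = Nat.card (hookSet p q d) := by
  refine Nat.card_congr (Equiv.ofBijective
    (fun lam => ⟨toDiagram lam.1, fun h => ?_, (card_toDiagram lam.1).trans_le lam.2⟩) ⟨?_, ?_⟩)
  · have := lam.1.hook'
    have := mem_toDiagram.1 h
    omega
  · rintro ⟨lam, _⟩ ⟨mu, _⟩ h
    have h1 : toDiagram lam = toDiagram mu := congrArg Subtype.val h
    have h2 : lam.part = mu.part := by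
      ext i
      rw [← rowLen_toDiagram, h1, rowLen_toDiagram]
    cases lam
    cases mu
    subst h2
    rfl
  · rintro ⟨Y, hY, hd⟩
    have hfin : (Function.support Y.rowLen).Finite := by
      refine (Y.cells.image Prod.fst).finite_toSet.subset fun i hi => ?_
      rw [Finset.mem_coe, Finset.mem_image]
      exact ⟨(i, 0), (YoungDiagram.mem_cells _).2
        (YoungDiagram.mem_iff_lt_rowLen.2 (Nat.pos_of_ne_zero hi)), rfl⟩
    let lam : HookPartition p q :=
      { part := Finsupp.ofSupportFinite Y.rowLen hfin
        antitone' := fun i j h => Y.rowLen_anti i j h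
        hook' := by
          rw [YoungDiagram.mem_iff_lt_rowLen] at hY
          exact not_lt.1 hY }
    have h1 : toDiagram lam = Y := by
      ext ⟨i, j⟩
      rw [YoungDiagram.mem_cells, YoungDiagram.mem_cells, mem_toDiagram,
        YoungDiagram.mem_iff_lt_rowLen]
      rfl
    refine ⟨⟨lam, ?_⟩, Subtype.ext h1⟩
    rw [← card_toDiagram, h1]
    exact hd

lemma hookSet_succ (p q d : ℕ) :
    hookSet (p + 1) (q + 1) d = hookSet p q d ∪ rectSet (p + 1) (q + 1) d := by
  ext Y
  constructor
  · rintro ⟨h1, h2⟩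
    by_cases h : (p, q) ∈ Y
    · exact Or.inr ⟨fun i hi j hj => Y.up_left_mem (by omega) (by omega) h, h1, h2⟩
    · exact Or.inl ⟨h, h2⟩
  · rintro (⟨h1, h2⟩ | ⟨_, h1, h2⟩)
    · exact ⟨fun h => h1 (Y.up_left_mem (by omega) (by omega) h), h2⟩
    · exact ⟨h1, h2⟩

lemma disjoint_hookSet_rectSet (p q d : ℕ) :
    Disjoint (hookSet p q d) (rectSet (p + 1) (q + 1) d) :=
  Set.disjoint_left.2 fun _ h1 h2 => h1.1 (h2.1 p (by omega) q (by omega))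

lemma hookSet_eq_rectSet {p q : ℕ} (h : p = 0 ∨ q = 0) (d : ℕ) :
    hookSet p q d = rectSet p q d := by
  ext Y
  refine ⟨fun hY => ⟨fun i hi j hj => ?_, hY⟩, fun hY => hY.2⟩
  omega

/-- The cells of a diagram of `rectSet p q d` split into the first `p` rows and, below them,
columns with index less than `q`. -/
lemma card_of_rect {p q : ℕ} {Y : YoungDiagram} (h1 : ∀ i < p, ∀ j < q, (i, j) ∈ Y)
    (h2 : (p, q) ∉ Y) :
    (∀ i < p, q ≤ Y.rowLen i) ∧ (∀ j < q, p ≤ Y.colLen j) ∧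
    Y.card = ∑ i : Fin p, (Y.rowLen i - q) + ∑ j : Fin q, (Y.colLen j - p) + p * q := by
  have hr : ∀ i < p, q ≤ Y.rowLen i := fun i hi => by
    by_contra! h
    exact lt_irrefl _ (YoungDiagram.mem_iff_lt_rowLen.1 (h1 i hi _ h))
  have hc : ∀ j < q, p ≤ Y.colLen j := fun j hj => by
    by_contra! h
    exact lt_irrefl _ (YoungDiagram.mem_iff_lt_colLen.1 (h1 _ h j hj))
  refine ⟨hr, hc, ?_⟩
  have e1 : (Y.cells.filter fun c => c.1 < p).card =
      ∑ i : Fin p, (Y.rowLen i - q) + p * q := by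
    have hm : Set.MapsTo Prod.fst ((Y.cells.filter fun c => c.1 < p : Finset (ℕ × ℕ)) :
        Set (ℕ × ℕ)) (Finset.range p) := by
      intro c hc
      simpa using (Finset.mem_filter.1 hc).2
    have hs : p * q = ∑ _i : Fin p, q := by simp
    rw [Finset.card_eq_sum_card_fiberwise hm, hs, ← Finset.sum_add_distrib,
      ← Fin.sum_univ_eq_sum_range
        (fun i => ((Y.cells.filter fun c => c.1 < p).filter fun c => c.1 = i).card)]
    refine Finset.sum_congr rfl fun i _ => ?_
    rw [Nat.sub_add_cancel (hr i i.2), YoungDiagram.rowLen_eq_card, YoungDiagram.row,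
      Finset.filter_filter]
    congr 1
    refine Finset.filter_congr fun c _ => ⟨fun h => h.2, fun h => ⟨by omega, h⟩⟩
  have e2 : (Y.cells.filter fun c => ¬ c.1 < p).card = ∑ j : Fin q, (Y.colLen j - p) := by
    have hm : Set.MapsTo Prod.snd ((Y.cells.filter fun c => ¬ c.1 < p : Finset (ℕ × ℕ)) :
        Set (ℕ × ℕ)) (Finset.range q) := by
      intro c hc
      obtain ⟨h3, h4⟩ := Finset.mem_filter.1 hc
      rw [Finset.mem_coe, Finset.mem_range]
      by_contra! h5
      exact h2 (Y.up_left_mem (not_lt.1 h4) h5 ((YoungDiagram.mem_cells _).1 h3))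
    rw [Finset.card_eq_sum_card_fiberwise hm,
      ← Fin.sum_univ_eq_sum_range
        (fun j => ((Y.cells.filter fun c => ¬ c.1 < p).filter fun c => c.2 = j).card)]
    refine Finset.sum_congr rfl fun j _ => ?_
    have : ((Y.cells.filter fun c => ¬ c.1 < p).filter fun c => c.2 = (j : ℕ)) =
        Finset.Ico p (Y.colLen j) ×ˢ {(j : ℕ)} := by
      ext ⟨k, l⟩
      simp only [Finset.mem_filter, YoungDiagram.mem_cells, Finset.mem_product, Finset.mem_Ico,
        Finset.mem_singleton, not_lt]
      constructor
      · rintro ⟨⟨h3, h4⟩, rfl⟩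
        exact ⟨⟨h4, YoungDiagram.mem_iff_lt_colLen.1 h3⟩, rfl⟩
      · rintro ⟨⟨h3, h4⟩, rfl⟩
        exact ⟨⟨YoungDiagram.mem_iff_lt_colLen.2 h4, h3⟩, rfl⟩
    rw [this, Finset.card_product, Nat.card_Ico, Finset.card_singleton, mul_one]
  rw [YoungDiagram.card, ← Finset.card_filter_add_card_filter_not (fun c : ℕ × ℕ => c.1 < p), e1,
    e2]
  omega

/-- The diagram made of the `p × q` rectangle, the partition `x.1` to its right and the conjugate
of the partition `x.2` below it. -/
def glue {p q : ℕ} (x : (Fin p → ℕ) × (Fin q → ℕ)) (h1 : Antitone x.1) (h2 : Antitone x.2) :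
    YoungDiagram where
  cells := (Finset.univ.biUnion fun i : Fin p => {(i : ℕ)} ×ˢ Finset.range (q + x.1 i)) ∪
    (Finset.univ.biUnion fun j : Fin q => Finset.range (p + x.2 j) ×ˢ {(j : ℕ)})
  isLowerSet := by
    rintro ⟨i, j⟩ ⟨i', j'⟩ ⟨hi, hj⟩ h
    simp only [Finset.coe_union, Finset.coe_biUnion, Set.mem_union, Set.mem_iUnion,
      Finset.mem_coe, Finset.mem_product, Finset.mem_singleton, Finset.mem_range,
      Finset.mem_univ, exists_prop, true_and] at h ⊢
    simp only at hi hj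
    rcases h with ⟨k, rfl, h⟩ | ⟨k, h, rfl⟩
    · refine Or.inl ⟨⟨i', by omega⟩, rfl, ?_⟩
      have := h1 (show (⟨i', by omega⟩ : Fin p) ≤ k from hi)
      omega
    · refine Or.inr ⟨⟨j', by omega⟩, ?_, rfl⟩
      have := h2 (show (⟨j', by omega⟩ : Fin q) ≤ k from hj)
      omega

lemma mem_glue {p q : ℕ} {x : (Fin p → ℕ) × (Fin q → ℕ)} {h1 : Antitone x.1} {h2 : Antitone x.2}
    {i j : ℕ} : (i, j) ∈ glue x h1 h2 ↔
      (∃ k : Fin p, i = k ∧ j < q + x.1 k) ∨ (∃ k : Fin q, i < p + x.2 k ∧ j = k) := by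
  rw [← YoungDiagram.mem_cells]
  simp [glue, and_comm, eq_comm]

/-- Removing the rectangle from a diagram of `rectSet p q d` leaves a partition to its right and
one below it. -/
lemma rectSet_equiv (p q d : ℕ) : Nonempty (rectSet p q d ≃ pairSet p q (p * q) d) := by
  refine ⟨(Equiv.ofBijective
    (fun Y => ⟨(fun i => Y.1.rowLen i - q, fun j => Y.1.colLen j - p), fun i j h => ?_,
      fun i j h => ?_, ?_⟩) ⟨?_, ?_⟩)⟩
  · exact Nat.sub_le_sub_right (Y.1.rowLen_anti i j h) q
  · exact Nat.sub_le_sub_right (Y.1.colLen_anti i j h) p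
  · exact (card_of_rect Y.2.1 Y.2.2.1).2.2 ▸ Y.2.2.2
  · rintro ⟨Y, hY1, hY2, hY3⟩ ⟨Z, hZ1, hZ2, hZ3⟩ h
    have h0 := congrArg Subtype.val h
    have hr : ∀ i < p, Y.rowLen i = Z.rowLen i := by
      intro i hi
      have := congrFun (congrArg Prod.fst h0) ⟨i, hi⟩
      simp only at this
      have := (card_of_rect hY1 hY2).1 i hi
      have := (card_of_rect hZ1 hZ2).1 i hi
      omega
    have hc : ∀ j < q, Y.colLen j = Z.colLen j := by
      intro j hj
      have := congrFun (congrArg Prod.snd h0) ⟨j, hj⟩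
      simp only at this
      have := (card_of_rect hY1 hY2).2.1 j hj
      have := (card_of_rect hZ1 hZ2).2.1 j hj
      omega
    apply Subtype.ext
    ext ⟨i, j⟩
    change (i, j) ∈ Y ↔ (i, j) ∈ Z
    by_cases hi : i < p
    · rw [YoungDiagram.mem_iff_lt_rowLen, hr i hi, YoungDiagram.mem_iff_lt_rowLen]
    by_cases hj : j < q
    · rw [YoungDiagram.mem_iff_lt_colLen, hc j hj, YoungDiagram.mem_iff_lt_colLen]
    · exact iff_of_false (fun h => hY2 (Y.up_left_mem (not_lt.1 hi) (not_lt.1 hj) h))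
        (fun h => hZ2 (Z.up_left_mem (not_lt.1 hi) (not_lt.1 hj) h))
  · rintro ⟨x, hx1, hx2, hx3⟩
    have h1 : ∀ i < p, ∀ j < q, (i, j) ∈ glue x hx1 hx2 := fun i hi j hj =>
      mem_glue.2 (Or.inl ⟨⟨i, hi⟩, rfl, by omega⟩)
    have h2 : (p, q) ∉ glue x hx1 hx2 := by
      rw [mem_glue]
      rintro (⟨k, h, _⟩ | ⟨k, _, h⟩)
      · omega
      · omega
    have hr : ∀ i : Fin p, (glue x hx1 hx2).rowLen i = q + x.1 i := by
      intro i
      refine rowLen_eq_iff.2 fun j => ?_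
      rw [mem_glue]
      constructor
      · rintro (⟨k, h, h'⟩ | ⟨k, _, h⟩)
        · rwa [Fin.ext h]
        · omega
      · exact fun h => Or.inl ⟨i, rfl, h⟩
    have hc : ∀ j : Fin q, (glue x hx1 hx2).colLen j = p + x.2 j := by
      intro j
      refine colLen_eq_iff.2 fun i => ?_
      rw [mem_glue]
      constructor
      · rintro (⟨k, h, _⟩ | ⟨k, h', h⟩)
        · omega
        · rwa [Fin.ext h]
      · exact fun h => Or.inr ⟨j, h, rfl⟩
    refine ⟨⟨glue x hx1 hx2, h1, h2, ?_⟩, ?_⟩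
    · rw [(card_of_rect h1 h2).2.2]
      simpa [hr, hc] using hx3
    · apply Subtype.ext
      simp [hr, hc]

instance (p q d : ℕ) : Finite (rectSet p q d) :=
  (rectSet_equiv p q d).elim fun e => Finite.of_equiv _ e.symm

lemma rank_symDeg_mul (p q d : ℕ) :
    Module.rank ℂ (symDeg p q (p * q) d) = (Nat.card (rectSet p q d) : Cardinal) := by
  rw [rank_symDeg, (rectSet_equiv p q d).elim fun e => Nat.card_congr e]

lemma rank_superDeg_of_zero {p q : ℕ} (h : p = 0 ∨ q = 0) (d : ℕ) :
    Finite (hookSet p q d) ∧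
      Module.rank ℂ (superDeg p q d) = (Nat.card (hookSet p q d) : Cardinal) := by
  rw [hookSet_eq_rectSet h, ← symDeg_eq_superDeg h, ← rank_symDeg_mul,
    show p * q = 0 from mul_eq_zero.2 h]
  exact ⟨inferInstance, rfl⟩

/-- The dimension and the number of diagrams satisfy the same recursion. Finiteness is carried
along because `Nat.card` of an infinite type is `0`. -/
lemma rank_superDeg (p q d : ℕ) : Finite (hookSet p q d) ∧
    Module.rank ℂ (superDeg p q d) = (Nat.card (hookSet p q d) : Cardinal) := by
  induction p generalizing q with
  | zero => exact rank_superDeg_of_zero (Or.inl rfl) d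
  | succ p ih =>
    cases q with
    | zero => exact rank_superDeg_of_zero (Or.inr rfl) d
    | succ q =>
      obtain ⟨h1, h2⟩ := ih q
      have hfin : (hookSet p q d).Finite := h1
      rw [hookSet_succ, rank_superDeg_succ, h2, rank_symDeg_mul, Nat.card_coe_set_eq,
        Nat.card_coe_set_eq, Nat.card_coe_set_eq,
        Set.ncard_union_eq (disjoint_hookSet_rectSet p q d) hfin (Set.toFinite _), Nat.cast_add]
      exact ⟨(hfin.union (Set.toFinite _)).to_subtype, rfl⟩

end HookSuper

/-- The space of polynomials in `Λ⁰` of total degree at most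
`2d` has dimension equal to the number of `(p,q)`-hook partitions of size at
most `d`. -/
theorem lambdaZero_deg_rank (p q : ℕ) (hp : 0 < p) (hq : 0 < q) (d : ℕ) :
    Module.rank ℂ (LambdaZeroDeg p q d)
      = Nat.card {lam : HookPartition p q // lam.size ≤ d} := by
  rw [HookSuper.rank_LambdaZeroDeg, HookSuper.card_hookPartition]
  exact (HookSuper.rank_superDeg p q d).2
end

section
/- With the stated setup, for a polynomial f ∈ ℂ[X₁,…,Xₙ] the following are equivalent: (a) f lies in A(ker α) + ℓ_{t_α}·ℂ[X₁,…,Xₙ]; (b) f(μ + α) = f(μ) for every functional μ ∈ (ℂⁿ)* with μ(t_α) = 0, where α is viewed as an element of (ℂⁿ)*. -/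
/-!
Evaluation at a functional turns `ℓ_v` into `μ v`, so on the hyperplane `μ t = 0` both
generators of `A(ker α)` and multiples of `ℓ_t` are unaffected by translation by `α`; this is
the direction from membership to invariance.

Conversely, choose `h` with `α h = 1` and let `Φ` be the substitution induced by the projection
`π v = v - α v • h` onto `ker α`. Then `Φ f ∈ A(ker α)`, and `(Φ f)(μ) = f(μ - μ(h) α)`. If `f` is
invariant and `μ t = 0`, the one-variable polynomial `z ↦ f(μ + z α)` is periodic with period `1`
(here `α t = 0` is used), hence constant, so `f - Φ f` vanishes on the hyperplane `μ t = 0`.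
Finally a polynomial `q` vanishing on that hyperplane is divisible by `ℓ_t`: for a functional `c`
with `c t = 1` (namely `c = B h`), the substitution `Ψ` induced by `v ↦ v - c v • t` is the identity
modulo `ℓ_t`, while `Ψ q` vanishes at every functional and is therefore zero.
-/

open MvPolynomial

/-- The linear polynomial `ℓ_v = Σᵢ vᵢ Xᵢ` associated with a vector `v ∈ ℂⁿ`;
this realises the identification of the symmetric algebra of `ℂⁿ` with
`ℂ[X₁, …, Xₙ]`. -/
noncomputable def linPoly {n : ℕ} (v : Fin n → ℂ) : MvPolynomial (Fin n) ℂ :=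
  ∑ i : Fin n, MvPolynomial.C (v i) * MvPolynomial.X i

/-- Evaluation of a polynomial at a linear functional `μ ∈ (ℂⁿ)*`, substituting
`Xᵢ ↦ μ(eᵢ)`. -/
noncomputable def evalFun {n : ℕ} (μ : (Fin n → ℂ) →ₗ[ℂ] ℂ)
    (f : MvPolynomial (Fin n) ℂ) : ℂ :=
  MvPolynomial.eval (fun i => μ (Pi.single i 1)) f

/-- `A(W)`: the `ℂ`-subalgebra of `ℂ[X₁, …, Xₙ]` generated by the linear
polynomials `ℓ_v`, `v ∈ W`. -/
noncomputable def algOf {n : ℕ} (W : Set (Fin n → ℂ)) :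
    Subalgebra ℂ (MvPolynomial (Fin n) ℂ) :=
  Algebra.adjoin ℂ (linPoly '' W)

/-- The algebra endomorphism of `ℂ[X₁, …, Xₙ]` induced by an endomorphism `L` of `ℂⁿ`, under the
identification of the polynomial ring with the symmetric algebra. -/
noncomputable def substHom {n : ℕ} (L : (Fin n → ℂ) →ₗ[ℂ] (Fin n → ℂ)) :
    MvPolynomial (Fin n) ℂ →ₐ[ℂ] MvPolynomial (Fin n) ℂ :=
  MvPolynomial.aeval fun i => linPoly (L (Pi.single i 1))

lemma evalFun_linPoly {n : ℕ} (μ : (Fin n → ℂ) →ₗ[ℂ] ℂ) (v : Fin n → ℂ) :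
    evalFun μ (linPoly v) = μ v := by
  rw [LinearMap.pi_apply_eq_sum_univ μ v]
  have h (i : Fin n) : (fun j => if i = j then (1 : ℂ) else 0) = Pi.single i 1 := by
    ext j
    simp [Pi.single_apply, eq_comm]
  simp [evalFun, linPoly, h]

lemma evalFun_substHom {n : ℕ} (L : (Fin n → ℂ) →ₗ[ℂ] (Fin n → ℂ))
    (μ : (Fin n → ℂ) →ₗ[ℂ] ℂ) (f : MvPolynomial (Fin n) ℂ) :
    evalFun μ (substHom L f) = evalFun (μ ∘ₗ L) f := by
  induction f using MvPolynomial.induction_on with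
  | C a => simp [evalFun, substHom]
  | add p q hp hq =>
    simp only [evalFun, map_add] at *
    rw [hp, hq]
  | mul_X p i hp =>
    have h := evalFun_linPoly μ (L (Pi.single i 1))
    simp only [evalFun, map_mul] at *
    rw [hp]
    simp [substHom, h]

lemma substHom_mem_algOf {n : ℕ} (L : (Fin n → ℂ) →ₗ[ℂ] (Fin n → ℂ)) (W : Set (Fin n → ℂ))
    (hL : ∀ v, L v ∈ W) (f : MvPolynomial (Fin n) ℂ) : substHom L f ∈ algOf W := by
  induction f using MvPolynomial.induction_on with
  | C a =>
    rw [← MvPolynomial.algebraMap_eq, AlgHom.commutes]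
    exact Subalgebra.algebraMap_mem _ a
  | add p q hp hq => rw [map_add]; exact add_mem hp hq
  | mul_X p i hp =>
    rw [map_mul]
    refine mul_mem hp ?_
    simp only [substHom, MvPolynomial.aeval_X]
    exact Algebra.subset_adjoin ⟨_, hL _, rfl⟩

lemma eq_zero_of_evalFun_eq_zero {n : ℕ} (f : MvPolynomial (Fin n) ℂ)
    (hf : ∀ μ : (Fin n → ℂ) →ₗ[ℂ] ℂ, evalFun μ f = 0) : f = 0 := by
  refine MvPolynomial.funext fun x => ?_
  -- Every point `x` is the coordinate vector of the functional `v ↦ Σᵢ vᵢ xᵢ`.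
  have h := hf (Fintype.linearCombination ℂ x)
  simpa [evalFun] using h

/-- A polynomial vanishing on the hyperplane `μ t = 0` is divisible by `ℓ_t`, provided `t ≠ 0`
(witnessed by a functional `c` with `c t = 1`). -/
lemma linPoly_dvd {n : ℕ} (t : Fin n → ℂ) (c : (Fin n → ℂ) →ₗ[ℂ] ℂ) (hc : c t = 1)
    (q : MvPolynomial (Fin n) ℂ)
    (hq : ∀ μ : (Fin n → ℂ) →ₗ[ℂ] ℂ, μ t = 0 → evalFun μ q = 0) : linPoly t ∣ q := by
  set L : (Fin n → ℂ) →ₗ[ℂ] (Fin n → ℂ) := LinearMap.id - c.smulRight t with hL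
  have h0 : substHom L q = 0 := by
    refine eq_zero_of_evalFun_eq_zero _ fun μ => ?_
    rw [evalFun_substHom]
    exact hq _ (by simp [hL, hc])
  have key : (Ideal.Quotient.mkₐ ℂ (Ideal.span {linPoly t})).comp (substHom L) =
      Ideal.Quotient.mkₐ ℂ (Ideal.span {linPoly t}) := by
    refine MvPolynomial.algHom_ext fun i => ?_
    simp only [AlgHom.comp_apply, Ideal.Quotient.mkₐ_eq_mk]
    rw [Ideal.Quotient.eq, Ideal.mem_span_singleton]
    refine ⟨-MvPolynomial.C (c (Pi.single i 1)), ?_⟩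
    have hX : linPoly (Pi.single i (1 : ℂ)) = MvPolynomial.X i := by
      simp [linPoly, Pi.single_apply]
    have hsub : linPoly (L (Pi.single i 1)) =
        linPoly (Pi.single i (1 : ℂ)) - MvPolynomial.C (c (Pi.single i 1)) * linPoly t := by
      simp only [linPoly, Finset.mul_sum, ← Finset.sum_sub_distrib]
      refine Finset.sum_congr rfl fun j _ => ?_
      simp only [hL, LinearMap.sub_apply, LinearMap.id_apply, LinearMap.smulRight_apply,
        Pi.sub_apply, Pi.smul_apply, smul_eq_mul, map_sub, map_mul]
      ring
    rw [show substHom L (MvPolynomial.X i) = linPoly (L (Pi.single i 1)) by simp [substHom],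
      hsub, hX]
    ring
  have := DFunLike.congr_fun key q
  simp only [AlgHom.comp_apply, h0, map_zero, Ideal.Quotient.mkₐ_eq_mk] at this
  rw [← Ideal.mem_span_singleton, ← Ideal.Quotient.eq_zero_iff_mem]
  exact this.symm

/-- Invariance under translation by `α` on the hyperplane `μ t = 0` forces invariance under
translation by every complex multiple of `α`. -/
lemma evalFun_add_smul {n : ℕ} (α : (Fin n → ℂ) →ₗ[ℂ] ℂ) (t : Fin n → ℂ) (hiso : α t = 0)
    (f : MvPolynomial (Fin n) ℂ)
    (hf : ∀ μ : (Fin n → ℂ) →ₗ[ℂ] ℂ, μ t = 0 → evalFun (μ + α) f = evalFun μ f)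
    (μ : (Fin n → ℂ) →ₗ[ℂ] ℂ) (hμ : μ t = 0) (z : ℂ) :
    evalFun (μ + z • α) f = evalFun μ f := by
  -- `p` is the restriction of `f` to the line `μ + ℂ α`.
  let p : Polynomial ℂ := MvPolynomial.aeval
    (fun i => Polynomial.C (μ (Pi.single i 1)) + Polynomial.X * Polynomial.C (α (Pi.single i 1))) f
  have hp (w : ℂ) : p.eval w = evalFun (μ + w • α) f := by
    have : (Polynomial.aeval w) p = MvPolynomial.aeval (fun i => (μ + w • α) (Pi.single i 1)) f := by
      simp only [p, ← AlgHom.comp_apply]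
      refine DFunLike.congr_fun (MvPolynomial.algHom_ext fun i => ?_) f
      simp
      ring
    simpa [evalFun, MvPolynomial.aeval_eq_eval, Polynomial.coe_aeval_eq_eval] using this
  have hnat (k : ℕ) : p.eval (k : ℂ) = evalFun μ f := by
    rw [hp]
    induction k with
    | zero => simp
    | succ k ih =>
      rw [← ih, ← hf (μ + (k : ℂ) • α) (by simp [hμ, hiso])]
      congr 1
      push_cast
      rw [add_smul, one_smul, add_assoc]
  have hconst : p = Polynomial.C (evalFun μ f) := by
    refine Polynomial.eq_of_infinite_eval_eq _ _
      ((Set.infinite_range_of_injective (Nat.cast_injective (R := ℂ))).mono ?_)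
    rintro _ ⟨k, rfl⟩
    simp [hnat]
  rw [← hp, hconst, Polynomial.eval_C]

/-- With `B` a nondegenerate symmetric bilinear form on `ℂⁿ`,
`α` a nonzero isotropic functional and `t_α` its `B`-dual, a polynomial `f`
lies in `A(ker α) + ℓ_{t_α}·ℂ[X₁, …, Xₙ]` if and only if `f(μ + α) = f(μ)`
for every functional `μ` with `μ(t_α) = 0`. -/
theorem mem_J_iff_translation_invariant (n : ℕ) (hn : 1 ≤ n)
    (B : (Fin n → ℂ) →ₗ[ℂ] (Fin n → ℂ) →ₗ[ℂ] ℂ)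
    (hBsymm : ∀ v w : Fin n → ℂ, B v w = B w v)
    (hBnondeg : ∀ v : Fin n → ℂ, (∀ w : Fin n → ℂ, B v w = 0) → v = 0)
    (α : (Fin n → ℂ) →ₗ[ℂ] ℂ) (hα : α ≠ 0)
    (t : Fin n → ℂ) (ht : ∀ v : Fin n → ℂ, B t v = α v) (hiso : α t = 0)
    (f : MvPolynomial (Fin n) ℂ) :
    (∃ a ∈ algOf (LinearMap.ker α : Set (Fin n → ℂ)),
      ∃ g : MvPolynomial (Fin n) ℂ, f = a + linPoly t * g) ↔
    (∀ μ : (Fin n → ℂ) →ₗ[ℂ] ℂ, μ t = 0 → evalFun (μ + α) f = evalFun μ f) := by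
  constructor
  · rintro ⟨a, ha, g, rfl⟩ μ hμ
    have hlin (ν : (Fin n → ℂ) →ₗ[ℂ] ℂ) (hν : ν t = 0) :
        evalFun ν (a + linPoly t * g) = evalFun ν a := by
      have h := evalFun_linPoly ν t
      simp only [evalFun, map_add, map_mul] at *
      simp [h, hν]
    rw [hlin _ hμ, hlin _ (by simp [hμ, hiso])]
    clear hlin
    induction ha using Algebra.adjoin_induction with
    | mem x hx =>
      obtain ⟨v, hv, rfl⟩ := hx
      have hv' : α v = 0 := hv
      simp [evalFun_linPoly, hv']
    | algebraMap r => simp [evalFun, MvPolynomial.algebraMap_eq]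
    | add x y _ _ hx hy =>
      simp only [evalFun, map_add] at *
      rw [hx, hy]
    | mul x y _ _ hx hy =>
      simp only [evalFun, map_mul] at *
      rw [hx, hy]
  · intro hf
    obtain ⟨v, hv⟩ : ∃ v, α v ≠ 0 := by
      by_contra! h
      exact hα (LinearMap.ext h)
    obtain ⟨h, hh⟩ : ∃ h, α h = 1 := ⟨(α v)⁻¹ • v, by simp [hv]⟩
    set π : (Fin n → ℂ) →ₗ[ℂ] (Fin n → ℂ) := LinearMap.id - α.smulRight h with hπ
    have hdvd : linPoly t ∣ f - substHom π f := by
      refine linPoly_dvd t (B h) (by rw [hBsymm, ht, hh]) _ fun μ hμ => ?_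
      have hcomp : μ ∘ₗ π = μ + (-μ h) • α := by
        refine LinearMap.ext fun w => ?_
        simp [hπ]
        ring
      have hsub : evalFun μ (f - substHom π f) = evalFun μ f - evalFun μ (substHom π f) := by
        simp [evalFun]
      rw [hsub, evalFun_substHom, hcomp, evalFun_add_smul α t hiso f hf μ hμ, sub_self]
    obtain ⟨g, hg⟩ := hdvd
    exact ⟨substHom π f, substHom_mem_algOf π _ (fun w => by simp [hπ, hh]) f, g,
      by rw [← hg]; ring⟩
end

section
/- With the stated setup, the subspace J_α(h₀) does not depend on the choice of h₀: if h₀, g₀ ∈ ℂⁿ both satisfy α(h₀) = α(g₀) = 1 and B(h₀,h₀) = B(g₀,g₀) = 0, then J_α(h₀) = J_α(g₀). -/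
/-!
The space `J_α(h₀)` has a description in which `h₀` does not occur:
`J_α(h₀) = A(ker α) + ℓ_t · ℂ[X₁, …, Xₙ]` (`Jalpha_eq`). Indeed a generator with `k = 0` lies in
`A(ker α)`, and one with `k ≥ 1` is a multiple of `ℓ_t`. Conversely, every `v ∈ ker α` is
`B(v, h₀) t` plus a vector of `𝔞_α^⊥(h₀)`, so `A(ker α)` is spanned by the products `ℓ_t^l s`;
and `ℂⁿ = ℂ h₀ ⊕ ker α`, so `ℂ[X₁, …, Xₙ]` is spanned by the products `ℓ_{h₀}^k ℓ_t^l s`,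
which after multiplication by `ℓ_t` become generators of `J_α(h₀)`.
-/

open MvPolynomial

/-- `J_α(h₀)`: the `ℂ`-linear span of all products `ℓ_{h₀}^k · ℓ_{t_α}^l · s`
with `k, l ∈ ℕ`, `l ≥ min(k, 1)` and `s ∈ A(𝔞_α^⊥(h₀))`, where
`𝔞_α^⊥(h₀) = {v : B(v, h₀) = 0 ∧ B(v, t_α) = 0}`. -/
noncomputable def Jalpha {n : ℕ} (B : (Fin n → ℂ) →ₗ[ℂ] (Fin n → ℂ) →ₗ[ℂ] ℂ)
    (t h₀ : Fin n → ℂ) : Submodule ℂ (MvPolynomial (Fin n) ℂ) :=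
  Submodule.span ℂ {f | ∃ (k l : ℕ) (s : MvPolynomial (Fin n) ℂ),
    min k 1 ≤ l ∧ s ∈ algOf {v : Fin n → ℂ | B v h₀ = 0 ∧ B v t = 0} ∧
    f = linPoly h₀ ^ k * linPoly t ^ l * s}

lemma linPoly_add {n : ℕ} (v w : Fin n → ℂ) : linPoly (v + w) = linPoly v + linPoly w := by
  simp [linPoly, add_mul, Finset.sum_add_distrib]

lemma linPoly_smul {n : ℕ} (c : ℂ) (v : Fin n → ℂ) : linPoly (c • v) = c • linPoly v := by
  simp [linPoly, Finset.smul_sum, MvPolynomial.smul_eq_C_mul, mul_assoc]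

lemma linPoly_single {n : ℕ} (i : Fin n) :
    linPoly (Pi.single i 1) = (MvPolynomial.X i : MvPolynomial (Fin n) ℂ) := by
  rw [linPoly, Finset.sum_eq_single i]
  · simp
  · intro j _ hj
    simp [hj]
  · simp

lemma mem_span_of_mem_adjoin_insert {A : Type*} [CommRing A] [Algebra ℂ A] (x : A) (G : Set A)
    {f : A} (hf : f ∈ Algebra.adjoin ℂ (insert x G)) :
    f ∈ Submodule.span ℂ {g | ∃ (l : ℕ) (s : A), s ∈ Algebra.adjoin ℂ G ∧ g = x ^ l * s} := by
  rw [← Subalgebra.mem_toSubmodule, Algebra.adjoin_eq_span] at hf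
  refine Submodule.span_mono ?_ hf
  intro g hg
  induction hg using Submonoid.closure_induction with
  | mem y hy =>
    rcases hy with rfl | hy
    · exact ⟨1, 1, one_mem _, by simp⟩
    · exact ⟨0, y, Algebra.subset_adjoin hy, by simp⟩
  | one => exact ⟨0, 1, one_mem _, by simp⟩
  | mul y z _ _ hy hz =>
    obtain ⟨l, s, hs, rfl⟩ := hy
    obtain ⟨m, r, hr, rfl⟩ := hz
    exact ⟨l + m, s * r, mul_mem hs hr, by ring⟩

/-- If `V ⊆ ℂ x + W`, then `A(V)` is spanned by the products `ℓ_x^l s` with `s ∈ A(W)`. -/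
lemma algOf_le_span {n : ℕ} {V W : Set (Fin n → ℂ)} (x : Fin n → ℂ)
    (h : ∀ v ∈ V, ∃ c : ℂ, v - c • x ∈ W) {f : MvPolynomial (Fin n) ℂ} (hf : f ∈ algOf V) :
    f ∈ Submodule.span ℂ {g | ∃ (l : ℕ) (s : MvPolynomial (Fin n) ℂ),
      s ∈ algOf W ∧ g = linPoly x ^ l * s} := by
  refine mem_span_of_mem_adjoin_insert _ _ (Algebra.adjoin_le ?_ hf)
  rintro _ ⟨v, hv, rfl⟩
  obtain ⟨c, hc⟩ := h v hv
  have e : linPoly v = linPoly (v - c • x) + c • linPoly x := by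
    rw [← linPoly_smul, ← linPoly_add, sub_add_cancel]
  rw [e]
  exact add_mem (Algebra.subset_adjoin (Set.mem_insert_of_mem _ ⟨_, hc, rfl⟩))
    (Subalgebra.smul_mem _ (Algebra.subset_adjoin (Set.mem_insert _ _)) c)

lemma algOf_univ {n : ℕ} : algOf (Set.univ : Set (Fin n → ℂ)) = ⊤ := by
  rw [eq_top_iff, ← MvPolynomial.adjoin_range_X (R := ℂ)]
  refine Algebra.adjoin_le ?_
  rintro _ ⟨i, rfl⟩
  exact Algebra.subset_adjoin ⟨_, trivial, linPoly_single i⟩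

/-- The description `J_α(h₀) = A(ker α) + ℓ_t · ℂ[X₁, …, Xₙ]`. -/
lemma Jalpha_eq {n : ℕ} (B : (Fin n → ℂ) →ₗ[ℂ] (Fin n → ℂ) →ₗ[ℂ] ℂ)
    (hBsymm : ∀ v w : Fin n → ℂ, B v w = B w v)
    (α : (Fin n → ℂ) →ₗ[ℂ] ℂ)
    (t : Fin n → ℂ) (ht : ∀ v : Fin n → ℂ, B t v = α v) (hiso : α t = 0)
    (h : Fin n → ℂ) (hh : α h = 1) :
    Jalpha B t h = Subalgebra.toSubmodule (algOf {v | α v = 0}) ⊔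
      LinearMap.range (LinearMap.mulLeft ℂ (linPoly t)) := by
  have ht' (v : Fin n → ℂ) : B v t = α v := by rw [hBsymm, ht]
  have htA : linPoly t ∈ algOf {v | α v = 0} := Algebra.subset_adjoin ⟨t, hiso, rfl⟩
  have hsub : algOf {v | B v h = 0 ∧ B v t = 0} ≤ algOf {v | α v = 0} := by
    refine Algebra.adjoin_mono (Set.image_mono ?_)
    rintro v ⟨-, hv⟩
    exact (ht' v).symm.trans hv
  have hker {f : MvPolynomial (Fin n) ℂ} (hf : f ∈ algOf {v | α v = 0}) :=
    algOf_le_span (W := {v | B v h = 0 ∧ B v t = 0}) t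
      (fun v (hv : α v = 0) => ⟨B v h, by simp [ht, hh], by simp [ht, ht', hv, hiso]⟩) hf
  apply le_antisymm
  · refine Submodule.span_le.2 ?_
    rintro _ ⟨k, l, s, hl, hs, rfl⟩
    rcases Nat.eq_zero_or_pos k with rfl | hk
    · refine Submodule.mem_sup_left ?_
      rw [Subalgebra.mem_toSubmodule, pow_zero, one_mul]
      exact mul_mem (pow_mem htA l) (hsub hs)
    · obtain ⟨m, rfl⟩ : ∃ m, l = m + 1 := ⟨l - 1, by omega⟩
      refine Submodule.mem_sup_right ⟨linPoly h ^ k * linPoly t ^ m * s, ?_⟩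
      rw [LinearMap.mulLeft_apply]
      ring
  · refine sup_le ?_ ?_
    · intro f hf
      refine Submodule.span_mono ?_ (hker hf)
      rintro _ ⟨l, s, hs, rfl⟩
      exact ⟨0, l, s, by simp, hs, by simp⟩
    · rintro _ ⟨g, rfl⟩
      have hg := algOf_le_span (W := {v | α v = 0}) h (fun v _ => ⟨α v, by simp [hh]⟩)
        (algOf_univ.symm ▸ Algebra.mem_top : g ∈ algOf Set.univ)
      suffices H : Submodule.span ℂ _ ≤ (Jalpha B t h).comap (LinearMap.mulLeft ℂ (linPoly t)) from
        H hg
      refine Submodule.span_le.2 ?_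
      rintro _ ⟨k, s, hs, rfl⟩
      -- The remaining membership is linear in `s`, so `s` may be taken of the form `ℓ_t^l r`.
      suffices H : Submodule.span ℂ _ ≤
          (Jalpha B t h).comap (LinearMap.mulLeft ℂ (linPoly t * linPoly h ^ k)) by
        have := H (hker hs)
        simpa [mul_assoc] using this
      refine Submodule.span_le.2 ?_
      rintro _ ⟨l, r, hr, rfl⟩
      refine Submodule.subset_span ⟨k, l + 1, r, by omega, hr, ?_⟩
      rw [LinearMap.mulLeft_apply]
      ring

/-- The subspace `J_α(h₀)` does not depend on the choice of
`h₀` with `α(h₀) = 1` and `B(h₀, h₀) = 0`. -/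
theorem Jalpha_independent_of_h0 (n : ℕ) (hn : 1 ≤ n)
    (B : (Fin n → ℂ) →ₗ[ℂ] (Fin n → ℂ) →ₗ[ℂ] ℂ)
    (hBsymm : ∀ v w : Fin n → ℂ, B v w = B w v)
    (hBnondeg : ∀ v : Fin n → ℂ, (∀ w : Fin n → ℂ, B v w = 0) → v = 0)
    (α : (Fin n → ℂ) →ₗ[ℂ] ℂ) (hα : α ≠ 0)
    (t : Fin n → ℂ) (ht : ∀ v : Fin n → ℂ, B t v = α v) (hiso : α t = 0)
    (h₀ g₀ : Fin n → ℂ)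
    (hh₀1 : α h₀ = 1) (hh₀2 : B h₀ h₀ = 0)
    (hg₀1 : α g₀ = 1) (hg₀2 : B g₀ g₀ = 0) :
    Jalpha B t h₀ = Jalpha B t g₀ := by
  rw [Jalpha_eq B hBsymm α t ht hiso h₀ hh₀1, Jalpha_eq B hBsymm α t ht hiso g₀ hg₀1]
end

section
/- Let x, y, z be integers with x ≥ y. Let (z₁, y₁) := r(y, z) and (z₂, x₁) := r(x, z₁), where r is the odd-reflection rule defined in the context. Then x₁ ≥ y₁. -/
/-- The odd-reflection rule: `r(a, b) = (b, a)` if `a = −b`, and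
`r(a, b) = (b + 1, a − 1)` otherwise. -/
def oddRef (ab : ℤ × ℤ) : ℤ × ℤ :=
  if ab.1 = -ab.2 then (ab.2, ab.1) else (ab.2 + 1, ab.1 - 1)

/-- If `x ≥ y` and `(z₁, y₁) = r(y, z)`, `(z₂, x₁) = r(x, z₁)`,
then `x₁ ≥ y₁`. -/
theorem oddRef_preserves_dominance (x y z : ℤ) (hxy : y ≤ x) :
    (oddRef (y, z)).2 ≤ (oddRef (x, (oddRef (y, z)).1)).2 := by
  -- If `y = -z`, then `z₁ = z` and `y₁ = y`: either `x = y`, and `x` is unchanged too, or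
  -- `x ≥ y + 1`, so that `x₁ = x - 1 ≥ y`. If `y ≠ -z`, then `y₁ = y - 1 ≤ x - 1 ≤ x₁`.
  simp only [oddRef]
  split_ifs <;> simp_all <;> omega
end

section
/- Let q ≥ 1 and let ν₁ ≥ ν₂ ≥ … ≥ ν_q ≥ 0 be integers. Let l be the number of indices j with ν_j > 0, and let m be an integer with m ≥ l. Then push(−m, [ν₁, …, ν_q, −ν_q, …, −ν₁]) ≤ m. -/
/-!
The block `[ν₁, …, ν_q, -ν_q, …, -ν₁]` is nested: the outer pair `ν₁`, `-ν₁` surrounds the block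
of `ν₂, …, ν_q`, so one inducts on `q` from the outside in. If `m > 0`, the entry `-ν₁` raises
`-m` to `-(m - 1)`, because `-m < 0 ≤ ν₁`. At most `m - 1` of the remaining `ν_j` are positive
(if `ν₁ = 0`, none is, by monotonicity), so the inner block gives a value at most `m - 1`, which
the entry `ν₁` raises by at most `1`. If `m = 0`, then `ν₁ = 0` and the value `0` passes the entry
`-ν₁` unchanged; the inner block returns a value at most `0`, and the entry `ν₁ = 0` cannot raise
that above `0`.
-/

/-- Helper for `push`: process a list of cross-marked entries from left to
right (this will be applied to the *reversed* list), the running value `z`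
staying unchanged on meeting an entry equal to `−z` and increasing by `1`
otherwise. -/
def pushGo : ℤ → List ℤ → ℤ
  | z, [] => z
  | z, x :: rest => pushGo (if x = -z then z else z + 1) rest

/-- `push(z, L)`: process `L` from its right end to its left end; on meeting an
entry `x`, the running value stays unchanged if `x = −z` and increases by `1`
otherwise. Thus `push(z, []) = z` and `push(z, L' ++ [x]) = push(z', L')` with
`z' = z` if `x = −z` and `z' = z + 1` otherwise. -/
def push (z : ℤ) (L : List ℤ) : ℤ := pushGo z L.reverse

theorem pushGo_append (z : ℤ) (A B : List ℤ) :
    pushGo z (A ++ B) = pushGo (pushGo z A) B := by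
  induction A generalizing z with
  | nil => rfl
  | cons x A ih => simp only [List.cons_append, pushGo, ih]

/-- The bound in processing order, without the assumption `1 ≤ q`, so that the induction can start
at the empty block. -/
theorem pushGo_nested_le (q : ℕ) (ν : Fin q → ℤ)
    (hmono : ∀ i j : Fin q, i ≤ j → ν j ≤ ν i)
    (hnonneg : ∀ j : Fin q, 0 ≤ ν j)
    (m : ℤ)
    (hm : ((Finset.univ.filter fun j : Fin q => 0 < ν j).card : ℤ) ≤ m) :
    pushGo (-m) ((List.ofFn fun j => -ν j) ++ (List.ofFn ν).reverse) ≤ m := by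
  induction q generalizing m with
  | zero =>
    simp at hm
    simp [pushGo]
    omega
  | succ q ih =>
    have ih' := ih (fun j => ν j.succ)
      (fun i j h => hmono _ _ (Fin.succ_le_succ_iff.mpr h)) (fun j => hnonneg _)
    have h0 := hnonneg 0
    have hcard : ((Finset.univ.filter fun j : Fin (q + 1) => 0 < ν j).card)
        = (if 0 < ν 0 then 1 else 0)
          + (Finset.univ.filter fun j : Fin q => 0 < ν j.succ).card := by
      rw [Fin.card_filter_univ_succ]
      split_ifs <;> simp [add_comm]
    have hzero : ν 0 = 0 →
        (Finset.univ.filter fun j : Fin q => 0 < ν j.succ).card = 0 := by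
      intro h
      rw [Finset.card_eq_zero, Finset.filter_eq_empty_iff]
      intro j _
      have := hmono 0 j.succ (Fin.zero_le _)
      omega
    rw [hcard] at hm
    push_cast at hm
    rw [List.ofFn_succ, List.ofFn_succ (f := ν), List.reverse_cons, List.cons_append,
      ← List.append_assoc, pushGo, pushGo_append]
    simp only [pushGo]
    by_cases hpos : 0 < m
    · have hstep : (if -ν 0 = - -m then -m else -m + 1) = -(m - 1) := by
        rw [if_neg (by omega)]; ring
      rw [hstep]
      have := ih' (m - 1) (by split_ifs at hm <;> omega)
      split_ifs <;> omega
    · have hν : ν 0 = 0 ∧ m = 0 := by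
        split_ifs at hm <;> omega
      obtain ⟨hν, rfl⟩ := hν
      have := ih' 0 (by rw [hzero hν]; simp)
      simp only [hν, neg_zero, if_true] at this ⊢
      split_ifs <;> omega

/-- For `ν₁ ≥ … ≥ ν_q ≥ 0` with `l` strictly positive
entries, and `m ≥ l`, pushing `−m` through `[ν₁, …, ν_q, −ν_q, …, −ν₁]` yields
a value at most `m`. -/
theorem push_le (q : ℕ) (hq : 1 ≤ q) (ν : Fin q → ℤ)
    (hmono : ∀ i j : Fin q, i ≤ j → ν j ≤ ν i)
    (hnonneg : ∀ j : Fin q, 0 ≤ ν j)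
    (m : ℤ)
    (hm : ((Finset.univ.filter fun j : Fin q => 0 < ν j).card : ℤ) ≤ m) :
    push (-m) (List.ofFn ν ++ (List.ofFn fun j => -ν j).reverse) ≤ m := by
  rw [push, List.reverse_append, List.reverse_reverse]
  exact pushGo_nested_le q ν hmono hnonneg m hm
end
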